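/- arXiv:2509.03048 — 2 statements merged into one kernel-verified Lean document; each statement's English description precedes it below -/
import Mathlib

section
/- For the elephant random walk with memory parameter p ∈ [0, 1) on a Cayley graph that is the d-regular tree T_d (d ≥ 3), the sequence of random variables r_n · (Δ_n/n − (d − 2)/d), n ≥ 1, is tight (i.e. for every ε > 0 there exists K > 0 such that P(|r_n (Δ_n/n − (d − 2)/d)| > K) < ε for all n), where r_n = n^{1/2} if p < p_d, r_n = (n / log n)^{1/2} if p = p_d, and r_n = n^{d(1−p)/(d−1)} if p > p_d, with p_d = (d + 1)/(2d). -/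
open MeasureTheory ProbabilityTheory Filter

noncomputable section

/-- The Cayley graph of a group with respect to a finite set of generators. -/
def cayleyGraph {G : Type*} [Group G] (S : Finset G) : SimpleGraph G where
  Adj x y := x ≠ y ∧ (y * x⁻¹ ∈ S ∨ x * y⁻¹ ∈ S)
  symm := by
    constructor
    rintro x y ⟨h1, h2⟩
    refine ⟨h1.symm, ?_⟩
    rcases h2 with h | h
    · exact Or.inr h
    · exact Or.inl h
  loopless := ⟨fun x h => h.1 rfl⟩

/-- The elephant random walk (ERW) with memory parameter `p` on the Cayley graph of a
group `G` with respect to a symmetric generating set `S` of cardinality `d`, not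
containing the identity, whose Cayley graph is a tree (hence the `d`-regular tree
`T_d`).  The steps are `g 1, g 2, …` (the value of `g 0` is irrelevant).  The law of
the process is characterised by: `g 1` is uniform on `S`, and, conditionally on the
first `n` steps being `s 1, …, s n`, the next step `g (n+1)` equals `a ∈ S` with
probability `p * N/n + ((1-p)/(d-1)) * (n-N)/n`, where `N = #{1 ≤ k ≤ n : s k = a}`;
this is precisely the probability that the walker, recalling a uniform past epoch
`D ∈ {1, …, n}`, repeats `g D` with probability `p` and takes any given other step
with probability `(1-p)/(d-1)`. -/
structure ERW (G : Type*) [Group G] [DecidableEq G] (d : ℕ) (p : ℝ)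
    (Ω : Type*) [MeasurableSpace Ω] (P : Measure Ω) where
  S : Finset G
  card_S : S.card = d
  symm_S : ∀ s ∈ S, s⁻¹ ∈ S
  one_not_mem : (1 : G) ∉ S
  tree : (cayleyGraph S).IsTree
  g : ℕ → Ω → G
  meas_g : ∀ n a, MeasurableSet {ω | g n ω = a}
  mem_S : ∀ n, 1 ≤ n → ∀ ω, g n ω ∈ S
  init : ∀ a ∈ S, (P {ω | g 1 ω = a}).toReal = 1 / d
  update : ∀ n, 1 ≤ n → ∀ s : ℕ → G, ∀ a ∈ S,
    (P ({ω | ∀ k ∈ Finset.Icc 1 n, g k ω = s k} ∩ {ω | g (n + 1) ω = a})).toReal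
      = (p * ((((Finset.Icc 1 n).filter fun k => s k = a).card : ℝ) / n)
          + (1 - p) / ((d : ℝ) - 1)
            * (((n : ℝ) - (((Finset.Icc 1 n).filter fun k => s k = a).card : ℝ)) / n))
        * (P {ω | ∀ k ∈ Finset.Icc 1 n, g k ω = s k}).toReal

namespace ERW

variable {G : Type*} [Group G] [DecidableEq G] {d : ℕ} {p : ℝ}
  {Ω : Type*} [MeasurableSpace Ω] {P : Measure Ω}

/-- The position `w n = g n ⋯ g 1` of the walk at time `n`. -/
def pos (E : ERW G d p Ω P) : ℕ → Ω → G
  | 0 => fun _ => 1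
  | n + 1 => fun ω => E.g (n + 1) ω * E.pos n ω

/-- `Δ n`: the (word-metric) distance of the walker from the root at time `n`. -/
def dist (E : ERW G d p Ω P) (n : ℕ) (ω : Ω) : ℕ :=
  (cayleyGraph E.S).dist 1 (E.pos n ω)

/-- `N n a`: the number of `a`-steps taken by time `n`. -/
def count (E : ERW G d p Ω P) (a : G) (n : ℕ) (ω : Ω) : ℕ :=
  ((Finset.Icc 1 n).filter fun k => E.g k ω = a).card

/-- `γ n`: the unique step decreasing the distance to the root by 1
(a junk value if the walker is at the root). -/
def gammaStep (E : ERW G d p Ω P) (n : ℕ) (ω : Ω) : G :=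
  @Classical.epsilon G ⟨1⟩ fun s =>
    s ∈ E.S ∧ (cayleyGraph E.S).dist 1 (s * E.pos n ω) + 1 = E.dist n ω

/-- `ℓ n = N n (γ n)` if the walker is away from the root, and `0` otherwise. -/
def ell (E : ERW G d p Ω P) (n : ℕ) (ω : Ω) : ℕ :=
  if E.pos n ω = 1 then 0 else E.count (E.gammaStep n ω) n ω

/-- `Ξ n = (1/n) ∑_{k=0}^{n-1} (ℓ k / k - 1(Δ k > 0)/d)` (with the convention
`ℓ 0 / 0 = 0`, automatic since division by zero yields zero). -/
def Xi (E : ERW G d p Ω P) (n : ℕ) (ω : Ω) : ℝ :=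
  (1 / n) * ∑ k ∈ Finset.range n,
    ((E.ell k ω : ℝ) / k - (if 0 < E.dist k ω then 1 else 0) / d)

/-- The natural filtration `F n` generated by the steps up to time `n`. -/
def filt (E : ERW G d p Ω P) (n : ℕ) : MeasurableSpace Ω :=
  ⨆ k ∈ Finset.Icc 1 n, MeasurableSpace.comap (E.g k) ⊤

/-- `G n = E[Δ (n+1) - Δ n | F n]`. -/
def drift (E : ERW G d p Ω P) (n : ℕ) : Ω → ℝ :=
  P[fun ω => ((E.dist (n + 1) ω : ℝ) - (E.dist n ω : ℝ)) | E.filt n]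

/-- The martingale differences `Y k = Δ k - Δ (k-1) - G (k-1)`. -/
def mdiff (E : ERW G d p Ω P) (k : ℕ) (ω : Ω) : ℝ :=
  (E.dist k ω : ℝ) - (E.dist (k - 1) ω : ℝ) - E.drift (k - 1) ω

/-- The martingale `M n = ∑_{k=1}^n Y k`. -/
def mart (E : ERW G d p Ω P) (n : ℕ) (ω : Ω) : ℝ :=
  ∑ k ∈ Finset.Icc 1 n, E.mdiff k ω

end ERW

/-- The rate `r n`: `√n` in the subcritical regime `p < p_d = (d+1)/(2d)`,
`√(n / log n)` in the critical regime `p = p_d`, and `n ^ (d(1-p)/(d-1))` in the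
supercritical regime `p > p_d`. -/
def rate (p : ℝ) (d : ℕ) (n : ℕ) : ℝ :=
  if p < ((d : ℝ) + 1) / (2 * d) then Real.sqrt n
  else if p = ((d : ℝ) + 1) / (2 * d) then Real.sqrt ((n : ℝ) / Real.log n)
  else (n : ℝ) ^ ((d : ℝ) * (1 - p) / ((d : ℝ) - 1))

/-!
Each step changes `Δ` by `±1`, and off the root exactly one generator brings the walk closer to it.
So the speed is `(d - 2) / d` up to three errors: the martingale part of the number of backtracking
steps, of order `√n` by orthogonality of its increments; the visits to the root; and the imbalance
of the step counts, which biases the backtracking probability away from `1 / d`.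

The centered count `X n` of a generator satisfies `E[X (n+1)²] ≤ (1 + 2α / n) E[X n²] + 1` with
`α = (dp - 1) / (d - 1)`, hence `E[X n²]` is of order `n`, `n log n` or `n ^ (2α)` according to
whether `α` is less than, equal to or greater than `1 / 2`, i.e. `p < p_d`, `p = p_d` or `p > p_d`.
The expected number of visits to the root is in turn bounded by the accumulated imbalance, because
`(d - 1)⁻¹ ^ Δ` loses at least `1 / 2` in mean at each visit and otherwise increases only by the
imbalance. This bounds the rescaled deviation of the speed in `L¹`, and Markov's inequality gives
tightness.
-/

section LinearRecurrence

variable {c b : ℝ} {v : ℕ → ℝ}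

theorem le_of_linear_recurrence {w : ℕ → ℝ} (hc : -1 ≤ c) (hone : v 1 ≤ w 1)
    (hv : ∀ n : ℕ, 1 ≤ n → v (n + 1) ≤ (1 + c / n) * v n + b)
    (hw : ∀ n : ℕ, 1 ≤ n → (1 + c / n) * w n + b ≤ w (n + 1)) {n : ℕ} (hn : 1 ≤ n) :
    v n ≤ w n := by
  induction n, hn using Nat.le_induction with
  | base => exact hone
  | succ n hn ih =>
    have hn' : (1 : ℝ) ≤ n := by exact_mod_cast hn
    have factor_nonneg : 0 ≤ 1 + c / n := by
      have : -1 ≤ c / n := by rw [le_div_iff₀ (by linarith)]; linarith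
      linarith
    calc v (n + 1) ≤ (1 + c / n) * v n + b := hv n hn
      _ ≤ (1 + c / n) * w n + b := by gcongr
      _ ≤ w (n + 1) := hw n hn

theorem le_mul_of_linear_recurrence {C : ℝ} (hc : -1 ≤ c) (hC : b ≤ (1 - c) * C) (hone : v 1 ≤ C)
    (hv : ∀ n : ℕ, 1 ≤ n → v (n + 1) ≤ (1 + c / n) * v n + b) {n : ℕ} (hn : 1 ≤ n) :
    v n ≤ C * n := by
  refine le_of_linear_recurrence (w := fun n => C * n) hc (by simpa using hone) hv
    (fun n hn => ?_) hn
  calc (1 + c / n) * (C * n) + b = C * n + c * C + b := by field_simp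
    _ ≤ C * (n + 1 : ℕ) := by push_cast; linarith

theorem le_mul_log_of_linear_recurrence (hb : 0 ≤ b)
    (hv : ∀ n : ℕ, 1 ≤ n → v (n + 1) ≤ (1 + 1 / n) * v n + b) {n : ℕ} (hn : 1 ≤ n) :
    v n ≤ (v 1 + b * Real.log n) * n := by
  refine le_of_linear_recurrence (w := fun n => (v 1 + b * Real.log n) * n)
    (by norm_num) (by simp) hv (fun n hn => ?_) hn
  have hn' : (0 : ℝ) < n := by exact_mod_cast hn
  have log_step : 1 / ((n : ℝ) + 1) ≤ Real.log (n + 1) - Real.log n := by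
    rw [← Real.log_div (by positivity) hn'.ne']
    refine le_trans (le_of_eq ?_) (Real.one_sub_inv_le_log_of_pos (by positivity))
    field_simp
    ring
  calc (1 + 1 / n) * ((v 1 + b * Real.log n) * n) + b
      = (v 1 + b * (Real.log n + 1 / (n + 1))) * (n + 1) := by field_simp; ring
    _ ≤ (v 1 + b * Real.log (n + 1 : ℕ)) * (n + 1 : ℕ) := by
      push_cast
      gcongr
      linarith

theorem one_add_div_mul_rpow_le {x : ℝ} (hc : 1 ≤ c) (hx : 0 < x) :
    (1 + c / x) * x ^ c ≤ (x + 1) ^ c := by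
  calc (1 + c / x) * x ^ c = (1 + c * (1 / x)) * x ^ c := by ring
    _ ≤ (1 + 1 / x) ^ c * x ^ c := by
      gcongr
      exact one_add_mul_self_le_rpow_one_add (by linarith [one_div_pos.2 hx]) hc
    _ = (x + 1) ^ c := by
      rw [← Real.mul_rpow (by positivity) hx.le]
      congr 1
      field_simp

-- If `b = (c - 1) * B`, then `n ↦ (v 1 + B) * n ^ c - B * n` is a supersolution of the recurrence.
theorem le_mul_rpow_of_linear_recurrence (hc : 1 < c) (hb : 0 ≤ b) (hone : 0 ≤ v 1)
    (hv : ∀ n : ℕ, 1 ≤ n → v (n + 1) ≤ (1 + c / n) * v n + b) {n : ℕ} (hn : 1 ≤ n) :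
    v n ≤ (v 1 + b / (c - 1)) * (n : ℝ) ^ c := by
  have hc' : 0 < c - 1 := by linarith
  have hB : 0 ≤ b / (c - 1) := by positivity
  have hbB : b = (c - 1) * (b / (c - 1)) := by field_simp
  set B := b / (c - 1)
  suffices v n ≤ (v 1 + B) * (n : ℝ) ^ c - B * n from this.trans (sub_le_self _ (by positivity))
  refine le_of_linear_recurrence (w := fun n => (v 1 + B) * (n : ℝ) ^ c - B * n)
    (by linarith) (by simp) hv (fun n hn => ?_) hn
  have hn' : (0 : ℝ) < n := by exact_mod_cast hn
  calc (1 + c / n) * ((v 1 + B) * (n : ℝ) ^ c - B * n) + b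
      = (v 1 + B) * ((1 + c / n) * (n : ℝ) ^ c) - B * (n + 1) := by
        rw [hbB]; field_simp; ring
    _ ≤ (v 1 + B) * ((n : ℝ) + 1) ^ c - B * (n + 1) := by
      gcongr
      exact one_add_div_mul_rpow_le hc.le hn'
    _ = (v 1 + B) * ((n + 1 : ℕ) : ℝ) ^ c - B * (n + 1 : ℕ) := by push_cast; rfl

end LinearRecurrence

section PowersAndLogarithms

variable {β : ℝ}

theorem rpow_sub_one_le_div (hβ : 0 < β) (hβ1 : β ≤ 1) {x : ℝ} (hx : 1 ≤ x) :
    x ^ (β - 1) ≤ (x ^ β - (x - 1) ^ β) / β := by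
  have hx0 : 0 < x := by linarith
  have hinv : 1 / x ≤ 1 := (div_le_one hx0).2 hx
  have bernoulli : (x - 1) ^ β ≤ (1 - β / x) * x ^ β := by
    calc (x - 1) ^ β = ((1 + -(1 / x)) * x) ^ β := by congr 1; field_simp; ring
      _ = (1 + -(1 / x)) ^ β * x ^ β := Real.mul_rpow (by linarith) hx0.le
      _ ≤ (1 + β * -(1 / x)) * x ^ β := by
        gcongr
        exact rpow_one_add_le_one_add_mul_self (by linarith) hβ.le hβ1
      _ = (1 - β / x) * x ^ β := by ring
  rw [Real.rpow_sub_one hx0.ne', le_div_iff₀ hβ]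
  calc x ^ β / x * β = x ^ β - (1 - β / x) * x ^ β := by ring
    _ ≤ x ^ β - (x - 1) ^ β := by gcongr

theorem sum_range_rpow_sub_one_le (hβ : 0 < β) (hβ1 : β ≤ 1) (n : ℕ) :
    ∑ k ∈ Finset.range n, ((k + 1 : ℕ) : ℝ) ^ (β - 1) ≤ (n : ℝ) ^ β / β := by
  calc ∑ k ∈ Finset.range n, ((k + 1 : ℕ) : ℝ) ^ (β - 1)
      ≤ ∑ k ∈ Finset.range n, (((k + 1 : ℕ) : ℝ) ^ β - (k : ℝ) ^ β) / β := by
        refine Finset.sum_le_sum fun k _ => ?_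
        simpa using rpow_sub_one_le_div hβ hβ1 (x := (k + 1 : ℕ)) (by simp)
    _ = (n : ℝ) ^ β / β := by
        rw [← Finset.sum_div, Finset.sum_range_sub (fun k : ℕ => (k : ℝ) ^ β)]
        simp [Real.zero_rpow hβ.ne']

theorem sqrt_div_log_mul_sqrt_one_add_log_le {n : ℕ} (hn : 1 ≤ n) :
    √(n / Real.log n) * √(1 + Real.log n) ≤ √3 * √n := by
  rw [← Real.sqrt_mul (by positivity), ← Real.sqrt_mul (by norm_num)]
  refine Real.sqrt_le_sqrt ?_
  obtain rfl | hn2 := hn.eq_or_lt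
  · simp
  have half_le_log : 1 / 2 ≤ Real.log n := by
    have : Real.log 2 ≤ Real.log n := Real.log_le_log two_pos (by exact_mod_cast hn2)
    linarith [Real.log_two_gt_d9]
  calc n / Real.log n * (1 + Real.log n) = n * (1 + Real.log n) / Real.log n := by ring
    _ ≤ 3 * n := by
      rw [div_le_iff₀ (by linarith)]
      nlinarith [Nat.cast_nonneg (α := ℝ) n]

theorem sqrt_mul_rpow_half_sub_one {x : ℝ} (hx : 0 < x) : √x * x ^ ((1 : ℝ) / 2 - 1) = 1 := by
  rw [Real.sqrt_eq_rpow, ← Real.rpow_add hx]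
  norm_num

end PowersAndLogarithms

section RandomVariables

variable {Ω : Type*} [MeasurableSpace Ω] {μ : Measure Ω}

theorem integral_abs_le_sqrt_integral_sq [IsProbabilityMeasure μ] {f : Ω → ℝ} (hf : MemLp f 2 μ) :
    ∫ ω, |f ω| ∂μ ≤ √(∫ ω, f ω ^ 2 ∂μ) := by
  refine Real.le_sqrt_of_sq_le ?_
  have := variance_eq_sub hf.abs ▸ variance_nonneg |f| μ
  simpa using this

theorem exists_forall_measure_lt_abs_lt [IsFiniteMeasure μ] {ι : Type*} {X : ι → Ω → ℝ}
    (hX : ∀ i, Integrable (X i) μ) {C : ℝ} (hC : ∀ i, ∫ ω, |X i ω| ∂μ ≤ C) {ε : ℝ} (hε : 0 < ε) :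
    ∃ K : ℝ, 0 < K ∧ ∀ i, (μ {ω | K < |X i ω|}).toReal < ε := by
  refine ⟨(|C| + 1) / ε, by positivity, fun i => ?_⟩
  have markov := mul_meas_ge_le_integral_of_nonneg (.of_forall fun ω => abs_nonneg (X i ω))
    (hX i).abs ((|C| + 1) / ε)
  have strict_le : (μ {ω | (|C| + 1) / ε < |X i ω|}).toReal ≤
      μ.real {ω | (|C| + 1) / ε ≤ |X i ω|} :=
    measureReal_mono (Set.ofPred_subset_ofPred.2 fun ω hω => hω.le)
  refine strict_le.trans_lt ?_
  have : (|C| + 1) / ε * μ.real {ω | (|C| + 1) / ε ≤ |X i ω|} < (|C| + 1) / ε * ε := by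
    calc _ ≤ C := markov.trans (hC i)
      _ < |C| + 1 := by linarith [le_abs_self C]
      _ = (|C| + 1) / ε * ε := by field_simp
  exact lt_of_mul_lt_mul_left this (by positivity)

theorem integral_sq_sum_range_of_orthogonal {ξ : ℕ → Ω → ℝ} (hξ : ∀ n, MemLp (ξ n) 2 μ)
    (horth : ∀ n, ∫ ω, (∑ k ∈ Finset.range n, ξ k ω) * ξ n ω ∂μ = 0) (n : ℕ) :
    ∫ ω, (∑ k ∈ Finset.range n, ξ k ω) ^ 2 ∂μ = ∑ k ∈ Finset.range n, ∫ ω, ξ k ω ^ 2 ∂μ := by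
  induction n with
  | zero => simp
  | succ n ih =>
    let M (ω : Ω) : ℝ := ∑ k ∈ Finset.range n, ξ k ω
    have hM : MemLp M 2 μ := memLp_finsetSum _ fun k _ => hξ k
    have hcross : Integrable (fun ω => 2 * (M ω * ξ n ω)) μ :=
      (hM.integrable_mul (hξ n)).const_mul 2
    have hsum : Integrable (fun ω => M ω ^ 2 + 2 * (M ω * ξ n ω)) μ := hM.integrable_sq.add hcross
    calc ∫ ω, (∑ k ∈ Finset.range (n + 1), ξ k ω) ^ 2 ∂μ
        = ∫ ω, (M ω ^ 2 + 2 * (M ω * ξ n ω) + ξ n ω ^ 2) ∂μ := by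
          simp only [Finset.sum_range_succ, M]
          congr with ω
          ring
      _ = ∫ ω, M ω ^ 2 ∂μ + 2 * ∫ ω, M ω * ξ n ω ∂μ + ∫ ω, ξ n ω ^ 2 ∂μ := by
          rw [integral_add hsum (hξ n).integrable_sq, integral_add hM.integrable_sq hcross,
            integral_const_mul]
      _ = ∑ k ∈ Finset.range (n + 1), ∫ ω, ξ k ω ^ 2 ∂μ := by
          rw [horth, ih, Finset.sum_range_succ, mul_zero, add_zero]

variable {ι : Type*} [Finite ι] {Y : Ω → ι}

theorem memLp_of_factorsThrough_finite [IsFiniteMeasure μ]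
    (hY : ∀ i, MeasurableSet (Y ⁻¹' {i})) {f : Ω → ℝ} (hf : f.FactorsThrough Y) (q : ENNReal) :
    MemLp f q μ := by
  let _ : MeasurableSpace ι := ⊤
  have hYm : Measurable Y := measurable_to_countable' hY
  rw [← hf.extend_comp fun _ => 0]
  exact MemLp.of_discrete.comp_of_map hYm.aemeasurable

theorem integral_eq_of_setIntegral_fiber_eq (hY : ∀ i, MeasurableSet (Y ⁻¹' {i})) {f g : Ω → ℝ}
    (hf : Integrable f μ) (hg : Integrable g μ)
    (hfg : ∀ ω₀, ∫ ω in Y ⁻¹' {Y ω₀}, f ω ∂μ = ∫ ω in Y ⁻¹' {Y ω₀}, g ω ∂μ) :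
    ∫ ω, f ω ∂μ = ∫ ω, g ω ∂μ := by
  have := Fintype.ofFinite ι
  have sum_fibers {h : Ω → ℝ} (hh : Integrable h μ) :
      ∫ ω, h ω ∂μ = ∑ i, ∫ ω in Y ⁻¹' {i}, h ω ∂μ := by
    rw [← integral_iUnion_fintype hY (fun i j hij => Disjoint.preimage Y (by simpa using hij))
      fun _ => hh.integrableOn, ← Set.preimage_iUnion, Set.iUnion_of_singleton, Set.preimage_univ,
      setIntegral_univ]
  rw [sum_fibers hf, sum_fibers hg]
  refine Finset.sum_congr rfl fun i _ => ?_
  rcases (Y ⁻¹' {i}).eq_empty_or_nonempty with hempty | ⟨ω₀, rfl⟩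
  · simp [hempty]
  · exact hfg ω₀

end RandomVariables

section Trees

theorem existsUnique_adj_dist_add_one_eq {V : Type*} {T : SimpleGraph V} (hT : T.IsTree) {u v : V}
    (huv : u ≠ v) : ∃! w, T.Adj v w ∧ T.dist u w + 1 = T.dist u v := by
  obtain ⟨γ, hγ, hγ_len⟩ := hT.connected.exists_path_of_dist u v
  have hnil : ¬γ.Nil := fun h => huv h.eq
  refine ⟨γ.penultimate, ⟨(γ.adj_penultimate hnil).symm, ?_⟩, ?_⟩
  · have := T.dist_le γ.dropLast
    have := SimpleGraph.Walk.length_dropLast_add_one hnil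
    have := hT.dist_eq_dist_add_one_of_adj u (γ.adj_penultimate hnil)
    omega
  · rintro w ⟨hw, hlt⟩
    obtain ⟨δ, -, hδ_len⟩ := hT.connected.exists_path_of_dist u w
    have hpath : (δ.concat hw.symm).IsPath := by
      apply SimpleGraph.Walk.isPath_of_length_eq_dist
      rw [SimpleGraph.Walk.length_concat]
      omega
    rw [← (hT.existsUnique_path u v).unique hpath hγ]
    simp

theorem cayleyGraph_adj_iff {G : Type*} [Group G] {S : Finset G} (hsymm : ∀ s ∈ S, s⁻¹ ∈ S)
    (hone : 1 ∉ S) {v w : G} : (cayleyGraph S).Adj v w ↔ ∃ a ∈ S, w = a * v := by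
  constructor
  · rintro ⟨-, h | h⟩
    · exact ⟨_, h, by group⟩
    · exact ⟨_, hsymm _ h, by group⟩
  · rintro ⟨a, ha, rfl⟩
    refine ⟨fun h => hone ?_, Or.inl (by simpa using ha)⟩
    rwa [← right_eq_mul.1 h]

end Trees

namespace ERW

variable {G : Type*} [Group G] [DecidableEq G] {d : ℕ} {p : ℝ}
  {Ω : Type*} [MeasurableSpace Ω] {P : Measure Ω}

section History

/-- The first `n` steps of the walk, as a random element of a finite set. A random variable is
adapted to the walk at time `n` when it factors through `E.history n`. -/
def history (E : ERW G d p Ω P) (n : ℕ) (ω : Ω) : Finset.Icc 1 n → E.S :=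
  fun k => ⟨E.g k ω, E.mem_S k (Finset.mem_Icc.1 k.2).1 ω⟩

variable {E : ERW G d p Ω P} {n : ℕ}

theorem history_eq_iff {ω ω' : Ω} :
    E.history n ω = E.history n ω' ↔ ∀ k ∈ Finset.Icc 1 n, E.g k ω = E.g k ω' := by
  simp only [funext_iff, history, Subtype.mk.injEq, Subtype.forall]

theorem history_factorsThrough_of_le {m : ℕ} (hmn : m ≤ n) :
    (E.history m).FactorsThrough (E.history n) := fun _ _ h =>
  history_eq_iff.2 fun k hk => history_eq_iff.1 h k (Finset.Icc_subset_Icc_right hmn hk)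

theorem measurableSet_history_fiber (t : Finset.Icc 1 n → E.S) :
    MeasurableSet (E.history n ⁻¹' {t}) := by
  have fiber_eq : E.history n ⁻¹' {t} = ⋂ k : Finset.Icc 1 n, {ω | E.g k ω = t k} := by
    ext ω
    simp [history, funext_iff, Subtype.ext_iff]
  rw [fiber_eq]
  exact MeasurableSet.iInter fun k => E.meas_g k (t k)

theorem memLp_of_factorsThrough_history [IsFiniteMeasure P] {f : Ω → ℝ}
    (hf : f.FactorsThrough (E.history n)) (q : ENNReal) : MemLp f q P :=
  memLp_of_factorsThrough_finite measurableSet_history_fiber hf q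

theorem integrable_of_factorsThrough_history [IsFiniteMeasure P] {f : Ω → ℝ}
    (hf : f.FactorsThrough (E.history n)) : Integrable f P :=
  memLp_one_iff_integrable.1 (memLp_of_factorsThrough_history hf 1)

theorem step_factorsThrough (E : ERW G d p Ω P) (n : ℕ) :
    (E.g (n + 1)).FactorsThrough (E.history (n + 1)) := fun _ _ h =>
  history_eq_iff.1 h (n + 1) (by simp)

theorem pos_factorsThrough (E : ERW G d p Ω P) (n : ℕ) :
    (E.pos n).FactorsThrough (E.history n) := by
  induction n with
  | zero => exact fun _ _ _ => rfl
  | succ n ih =>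
    intro ω ω' h
    simp only [pos, E.step_factorsThrough n h, ih (history_factorsThrough_of_le n.le_succ h)]

theorem dist_factorsThrough (E : ERW G d p Ω P) (n : ℕ) :
    (E.dist n).FactorsThrough (E.history n) := fun _ _ h => by
  simp only [dist, E.pos_factorsThrough n h]

theorem gammaStep_factorsThrough (E : ERW G d p Ω P) (n : ℕ) :
    (E.gammaStep n).FactorsThrough (E.history n) := fun _ _ h => by
  simp only [gammaStep, E.pos_factorsThrough n h, E.dist_factorsThrough n h]

theorem count_factorsThrough (E : ERW G d p Ω P) (a : G) (n : ℕ) :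
    (E.count a n).FactorsThrough (E.history n) := fun _ _ h => by
  refine congrArg Finset.card (Finset.filter_congr fun k hk => ?_)
  rw [history_eq_iff.1 h k hk]

end History

section StepLaw

/-- The conditional probability that the step following the first `n` steps is `a`. -/
def stepProb (E : ERW G d p Ω P) (a : G) (n : ℕ) (ω : Ω) : ℝ :=
  p * ((E.count a n ω : ℝ) / n) + (1 - p) / ((d : ℝ) - 1) * (((n : ℝ) - E.count a n ω) / n)

variable (E : ERW G d p Ω P) {n : ℕ}

theorem stepProb_factorsThrough (a : G) (n : ℕ) :
    (E.stepProb a n).FactorsThrough (E.history n) := fun _ _ h => by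
  simp only [stepProb, E.count_factorsThrough a n h]

theorem count_div_mem_Icc (a : G) (n : ℕ) (ω : Ω) :
    (E.count a n ω : ℝ) / n ∈ Set.Icc (0 : ℝ) 1 := by
  have : E.count a n ω ≤ n := (Finset.card_filter_le _ _).trans (by simp)
  exact ⟨by positivity, div_le_one_of_le₀ (by exact_mod_cast this) (by positivity)⟩

theorem stepProb_mem_Icc (hd : 1 < d) (hp0 : 0 ≤ p) (hp1 : p ≤ 1) (a : G) (n : ℕ) (ω : Ω) :
    E.stepProb a n ω ∈ Set.Icc (0 : ℝ) 1 := by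
  rcases n.eq_zero_or_pos with rfl | hn
  · simp [stepProb]
  have hd' : (2 : ℝ) ≤ d := by exact_mod_cast hd
  obtain ⟨hx0, hx1⟩ := E.count_div_mem_Icc a n ω
  have hr0 : 0 ≤ (1 - p) / ((d : ℝ) - 1) := div_nonneg (by linarith) (by linarith)
  have hr1 : (1 - p) / ((d : ℝ) - 1) ≤ 1 := div_le_one_of_le₀ (by linarith) (by linarith)
  have complement : ((n : ℝ) - E.count a n ω) / n = 1 - E.count a n ω / n := by
    rw [sub_div, div_self (by positivity)]
  rw [stepProb, complement]
  constructor <;> nlinarith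

theorem measureReal_history_fiber_inter (hn : 1 ≤ n) (ω₀ : Ω) {a : G} (ha : a ∈ E.S) :
    P.real (E.history n ⁻¹' {E.history n ω₀} ∩ {ω | E.g (n + 1) ω = a}) =
      E.stepProb a n ω₀ * P.real (E.history n ⁻¹' {E.history n ω₀}) := by
  have fiber_eq : E.history n ⁻¹' {E.history n ω₀} =
      {ω | ∀ k ∈ Finset.Icc 1 n, E.g k ω = E.g k ω₀} :=
    Set.ext fun _ => history_eq_iff
  rw [fiber_eq]
  exact E.update n hn (fun k => E.g k ω₀) a ha

theorem integral_mul_step_eq [IsFiniteMeasure P] (hn : 1 ≤ n) {A : Ω → G} {f : Ω → ℝ}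
    (hA : A.FactorsThrough (E.history n)) (hf : f.FactorsThrough (E.history n))
    (hAS : ∀ ω, f ω ≠ 0 → A ω ∈ E.S) :
    ∫ ω, f ω * (if E.g (n + 1) ω = A ω then 1 else 0) ∂P =
      ∫ ω, f ω * E.stepProb (A ω) n ω ∂P := by
  have hleft : (fun ω : Ω => f ω * (if E.g (n + 1) ω = A ω then 1 else 0)).FactorsThrough
      (E.history (n + 1)) := fun ω ω' h => by
    have h' := history_factorsThrough_of_le n.le_succ h
    simp only [hf h', hA h', E.step_factorsThrough n h]
  have hright : (fun ω => f ω * E.stepProb (A ω) n ω).FactorsThrough (E.history n) :=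
    fun ω ω' h => by simp only [hf h, hA h, E.stepProb_factorsThrough _ n h]
  refine integral_eq_of_setIntegral_fiber_eq (measurableSet_history_fiber (E := E) (n := n))
    (integrable_of_factorsThrough_history hleft) (integrable_of_factorsThrough_history hright)
    fun ω₀ => ?_
  set F := E.history n ⁻¹' {E.history n ω₀}
  have hF : MeasurableSet F := measurableSet_history_fiber _
  have left_const : ∫ ω in F, f ω * (if E.g (n + 1) ω = A ω then 1 else 0) ∂P =
      f ω₀ * P.real (F ∩ {ω | E.g (n + 1) ω = A ω₀}) := by
    rw [Set.inter_comm, ← measureReal_restrict_apply (E.meas_g _ _),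
      ← integral_indicator_one (E.meas_g _ _), ← integral_const_mul]
    refine setIntegral_congr_fun hF fun ω hω => ?_
    simp only [hf hω, hA hω, Set.indicator_apply, Set.mem_ofPred, Pi.one_apply]
  have right_const : ∫ ω in F, f ω * E.stepProb (A ω) n ω ∂P =
      f ω₀ * (E.stepProb (A ω₀) n ω₀ * P.real F) := by
    rw [setIntegral_congr_fun hF (g := fun _ => f ω₀ * E.stepProb (A ω₀) n ω₀)
      fun ω hω => hright hω, setIntegral_const]
    simp only [smul_eq_mul]
    ring
  rw [left_const, right_const]
  rcases eq_or_ne (f ω₀) 0 with hzero | hne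
  · simp [hzero]
  · rw [E.measureReal_history_fiber_inter hn ω₀ (hAS ω₀ hne)]

end StepLaw

section StepCounts

/-- The exponent `α = (dp - 1) / (d - 1)` with which fluctuations of the step counts are
reinforced by the memory; the critical memory parameter is the one with `α = 1 / 2`. -/
def memoryExponent (d : ℕ) (p : ℝ) : ℝ := (d * p - 1) / (d - 1)

theorem memoryExponent_le_one (hd : 1 < d) (hp1 : p ≤ 1) : memoryExponent d p ≤ 1 := by
  have hd' : (1 : ℝ) < d := by exact_mod_cast hd
  rw [memoryExponent, div_le_one (by linarith)]
  nlinarith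

theorem neg_half_le_memoryExponent (hd : 3 ≤ d) (hp0 : 0 ≤ p) : -(1 / 2) ≤ memoryExponent d p := by
  have hd' : (3 : ℝ) ≤ d := by exact_mod_cast hd
  rw [memoryExponent, le_div_iff₀ (by linarith)]
  nlinarith

theorem abs_memoryExponent_le_one (hd : 1 < d) (hp0 : 0 ≤ p) (hp1 : p ≤ 1) :
    |memoryExponent d p| ≤ 1 := by
  have hd' : (2 : ℝ) ≤ d := by exact_mod_cast hd
  refine abs_le.2 ⟨?_, memoryExponent_le_one hd hp1⟩
  rw [memoryExponent, le_div_iff₀ (by linarith)]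
  nlinarith

/-- The number of `a`-steps taken by time `n`, centered at the value `n / d` that it would have
if all generators were used equally often. -/
def centeredCount (E : ERW G d p Ω P) (a : G) (n : ℕ) (ω : Ω) : ℝ :=
  E.count a n ω - n / d

variable (E : ERW G d p Ω P) {n : ℕ}

theorem centeredCount_factorsThrough (a : G) (n : ℕ) :
    (E.centeredCount a n).FactorsThrough (E.history n) := fun _ _ h => by
  simp only [centeredCount, E.count_factorsThrough a n h]

theorem memLp_centeredCount [IsFiniteMeasure P] (a : G) (n : ℕ) :
    MemLp (E.centeredCount a n) 2 P :=
  memLp_of_factorsThrough_history (E.centeredCount_factorsThrough a n) 2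

theorem stepProb_eq (hd : 1 < d) (hn : 1 ≤ n) (a : G) (ω : Ω) :
    E.stepProb a n ω = 1 / d + memoryExponent d p * (E.centeredCount a n ω / n) := by
  have hd0 : (d : ℝ) ≠ 0 := by positivity
  have hd1 : (d : ℝ) - 1 ≠ 0 := sub_ne_zero.2 (by exact_mod_cast hd.ne')
  have hn0 : (n : ℝ) ≠ 0 := by positivity
  rw [stepProb, memoryExponent, centeredCount]
  field_simp
  ring

theorem centeredCount_succ (a : G) (n : ℕ) (ω : Ω) :
    E.centeredCount a (n + 1) ω =
      E.centeredCount a n ω + ((if E.g (n + 1) ω = a then 1 else 0) - 1 / d) := by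
  have count_succ : E.count a (n + 1) ω =
      E.count a n ω + if E.g (n + 1) ω = a then 1 else 0 := by
    simp only [count, Finset.card_filter]
    exact Finset.sum_Icc_succ_top (by omega) _
  rw [centeredCount, centeredCount, count_succ]
  push_cast
  ring

theorem abs_centeredCount_succ_sub_le (a : G) (n : ℕ) (ω : Ω) :
    |E.centeredCount a (n + 1) ω - E.centeredCount a n ω| ≤ 1 := by
  have hd0 : 0 ≤ 1 / (d : ℝ) := by positivity
  have hd1 : 1 / (d : ℝ) ≤ 1 := by rw [one_div]; exact Nat.cast_inv_le_one d
  rw [centeredCount_succ, add_sub_cancel_left, abs_le]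
  split_ifs <;> constructor <;> linarith

theorem integral_centeredCount_mul_increment [IsFiniteMeasure P] (hd : 1 < d) (hn : 1 ≤ n) {a : G}
    (ha : a ∈ E.S) :
    ∫ ω, E.centeredCount a n ω * (E.centeredCount a (n + 1) ω - E.centeredCount a n ω) ∂P =
      memoryExponent d p / n * ∫ ω, E.centeredCount a n ω ^ 2 ∂P := by
  have integrable_X := (E.memLp_centeredCount a n).integrable one_le_two
  have integrable_hit : Integrable
      (fun ω => E.centeredCount a n ω * (if E.g (n + 1) ω = a then 1 else 0)) P := by
    refine integrable_of_factorsThrough_history (n := n + 1) (E := E) fun _ _ h => ?_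
    simp only [E.step_factorsThrough n h,
      E.centeredCount_factorsThrough a n (history_factorsThrough_of_le n.le_succ h)]
  have hit : ∫ ω, E.centeredCount a n ω * (if E.g (n + 1) ω = a then 1 else 0) ∂P =
      ∫ ω, (E.centeredCount a n ω * (1 / d) +
        memoryExponent d p / n * E.centeredCount a n ω ^ 2) ∂P := by
    rw [E.integral_mul_step_eq hn (A := fun _ => a) (fun _ _ _ => rfl)
      (E.centeredCount_factorsThrough a n) fun _ _ => ha]
    congr with ω
    rw [E.stepProb_eq hd hn]
    ring
  simp only [centeredCount_succ, add_sub_cancel_left, mul_sub]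
  rw [integral_sub integrable_hit (integrable_X.mul_const _), hit,
    integral_add (integrable_X.mul_const _)
      ((E.memLp_centeredCount a n).integrable_sq.const_mul _), integral_const_mul,
    add_sub_cancel_left]

theorem integral_sq_centeredCount_succ_le [IsProbabilityMeasure P] (hd : 1 < d) (hn : 1 ≤ n)
    {a : G} (ha : a ∈ E.S) :
    ∫ ω, E.centeredCount a (n + 1) ω ^ 2 ∂P ≤
      (1 + 2 * memoryExponent d p / n) * ∫ ω, E.centeredCount a n ω ^ 2 ∂P + 1 := by
  let X := E.centeredCount a n
  let ξ (ω : Ω) : ℝ := E.centeredCount a (n + 1) ω - X ω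
  have hX : MemLp X 2 P := E.memLp_centeredCount a n
  have hξ : MemLp ξ 2 P := (E.memLp_centeredCount a (n + 1)).sub hX
  have hcross : Integrable (fun ω => 2 * (X ω * ξ ω)) P := (hX.integrable_mul hξ).const_mul 2
  calc ∫ ω, E.centeredCount a (n + 1) ω ^ 2 ∂P
      ≤ ∫ ω, (X ω ^ 2 + 2 * (X ω * ξ ω) + 1) ∂P := by
        refine integral_mono (E.memLp_centeredCount a (n + 1)).integrable_sq
          ((hX.integrable_sq.add hcross).add (integrable_const 1)) fun ω => ?_
        have ξ_sq_le : ξ ω ^ 2 ≤ 1 :=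
          (sq_le_one_iff_abs_le_one _).2 (E.abs_centeredCount_succ_sub_le a n ω)
        calc E.centeredCount a (n + 1) ω ^ 2 = X ω ^ 2 + 2 * (X ω * ξ ω) + ξ ω ^ 2 := by ring
          _ ≤ X ω ^ 2 + 2 * (X ω * ξ ω) + 1 := by gcongr
    _ = ∫ ω, X ω ^ 2 ∂P + 2 * ∫ ω, X ω * ξ ω ∂P + 1 := by
        rw [integral_add (f := fun ω => X ω ^ 2 + 2 * (X ω * ξ ω))
          (hX.integrable_sq.add hcross) (integrable_const 1),
          integral_add hX.integrable_sq hcross, integral_const_mul, integral_const]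
        simp
    _ = (1 + 2 * memoryExponent d p / n) * ∫ ω, E.centeredCount a n ω ^ 2 ∂P + 1 := by
        rw [E.integral_centeredCount_mul_increment hd hn ha]
        ring

theorem integral_sq_centeredCount_one_le [IsProbabilityMeasure P] (a : G) :
    ∫ ω, E.centeredCount a 1 ω ^ 2 ∂P ≤ 1 := by
  have sq_le (ω : Ω) : E.centeredCount a 1 ω ^ 2 ≤ 1 := by
    simpa [centeredCount, count] using E.abs_centeredCount_succ_sub_le a 0 ω
  simpa using integral_mono (E.memLp_centeredCount a 1).integrable_sq (integrable_const 1) sq_le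

theorem integral_sq_centeredCount_le_of_memoryExponent_lt [IsProbabilityMeasure P] (hd : 3 ≤ d)
    (hp0 : 0 ≤ p) (hα : memoryExponent d p < 1 / 2) {a : G} (ha : a ∈ E.S) (hn : 1 ≤ n) :
    ∫ ω, E.centeredCount a n ω ^ 2 ∂P ≤ (1 + 1 / (1 - 2 * memoryExponent d p)) * n := by
  have hgap : 0 < 1 - 2 * memoryExponent d p := by linarith
  refine le_mul_of_linear_recurrence (c := 2 * memoryExponent d p) (b := 1)
    (v := fun n => ∫ ω, E.centeredCount a n ω ^ 2 ∂P)
    (by linarith [neg_half_le_memoryExponent hd hp0]) ?_ ?_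
    (fun n hn => E.integral_sq_centeredCount_succ_le (by omega) hn ha) hn
  · rw [mul_add, mul_one_div_cancel hgap.ne']
    linarith
  · exact (E.integral_sq_centeredCount_one_le a).trans (le_add_of_nonneg_right (by positivity))

theorem integral_sq_centeredCount_le_of_memoryExponent_eq [IsProbabilityMeasure P] (hd : 1 < d)
    (hα : memoryExponent d p = 1 / 2) {a : G} (ha : a ∈ E.S) (hn : 1 ≤ n) :
    ∫ ω, E.centeredCount a n ω ^ 2 ∂P ≤ (1 + Real.log n) * n := by
  have recurrence (n : ℕ) (hn : 1 ≤ n) := E.integral_sq_centeredCount_succ_le hd hn ha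
  simp only [hα, mul_one_div_cancel (two_ne_zero (α := ℝ))] at recurrence
  refine (le_mul_log_of_linear_recurrence (v := fun n => ∫ ω, E.centeredCount a n ω ^ 2 ∂P)
    zero_le_one recurrence hn).trans ?_
  rw [one_mul]
  gcongr
  exact E.integral_sq_centeredCount_one_le a

theorem integral_sq_centeredCount_le_of_lt_memoryExponent [IsProbabilityMeasure P] (hd : 1 < d)
    (hα : 1 / 2 < memoryExponent d p) {a : G} (ha : a ∈ E.S) (hn : 1 ≤ n) :
    ∫ ω, E.centeredCount a n ω ^ 2 ∂P ≤
      (1 + 1 / (2 * memoryExponent d p - 1)) * (n : ℝ) ^ (2 * memoryExponent d p) := by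
  refine (le_mul_rpow_of_linear_recurrence (c := 2 * memoryExponent d p) (b := 1)
    (v := fun n => ∫ ω, E.centeredCount a n ω ^ 2 ∂P) (by linarith) zero_le_one
    (integral_nonneg fun _ => sq_nonneg _)
    (fun n hn => E.integral_sq_centeredCount_succ_le hd hn ha) hn).trans ?_
  gcongr
  exact E.integral_sq_centeredCount_one_le a

end StepCounts

section Backtracking

/-- The indicator that step `n + 1` decreases the distance to the root. -/
def backtrack (E : ERW G d p Ω P) (n : ℕ) (ω : Ω) : ℝ :=
  if E.dist (n + 1) ω < E.dist n ω then 1 else 0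

/-- The indicator that the walk is at the root at time `n`. -/
def atRoot (E : ERW G d p Ω P) (n : ℕ) (ω : Ω) : ℝ :=
  if E.pos n ω = 1 then 1 else 0

/-- The conditional probability of `E.backtrack n` given the first `n` steps. -/
def backtrackProb (E : ERW G d p Ω P) (n : ℕ) (ω : Ω) : ℝ :=
  (1 - E.atRoot n ω) * E.stepProb (E.gammaStep n ω) n ω

variable (E : ERW G d p Ω P)

theorem atRoot_factorsThrough (n : ℕ) : (E.atRoot n).FactorsThrough (E.history n) :=
  fun _ _ h => by simp only [atRoot, E.pos_factorsThrough n h]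

theorem backtrackProb_factorsThrough (n : ℕ) : (E.backtrackProb n).FactorsThrough (E.history n) :=
  fun _ _ h => by
    simp only [backtrackProb, E.atRoot_factorsThrough n h, E.gammaStep_factorsThrough n h,
      E.stepProb_factorsThrough _ n h]

theorem backtrack_factorsThrough (n : ℕ) : (E.backtrack n).FactorsThrough (E.history (n + 1)) :=
  fun _ _ h => by
    simp only [backtrack, E.dist_factorsThrough (n + 1) h,
      E.dist_factorsThrough n (history_factorsThrough_of_le n.le_succ h)]

theorem adj_pos_iff {n : ℕ} {ω : Ω} {w : G} :
    (cayleyGraph E.S).Adj (E.pos n ω) w ↔ ∃ a ∈ E.S, w = a * E.pos n ω :=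
  cayleyGraph_adj_iff E.symm_S E.one_not_mem

theorem dist_succ_eq_or (n : ℕ) (ω : Ω) :
    E.dist n ω = E.dist (n + 1) ω + 1 ∨ E.dist (n + 1) ω = E.dist n ω + 1 :=
  E.tree.dist_eq_dist_add_one_of_adj 1
    (E.adj_pos_iff.2 ⟨E.g (n + 1) ω, E.mem_S _ n.succ_pos ω, rfl⟩)

theorem dist_succ (n : ℕ) (ω : Ω) :
    (E.dist (n + 1) ω : ℝ) = E.dist n ω + 1 - 2 * E.backtrack n ω := by
  rcases E.dist_succ_eq_or n ω with h | h
  · rw [backtrack, if_pos (by omega), h]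
    push_cast
    ring
  · rw [backtrack, if_neg (by omega), h]
    push_cast
    ring

theorem existsUnique_step_dist_add_one_eq {n : ℕ} {ω : Ω} (hω : E.pos n ω ≠ 1) :
    ∃! a, a ∈ E.S ∧ (cayleyGraph E.S).dist 1 (a * E.pos n ω) + 1 = E.dist n ω := by
  obtain ⟨w, ⟨hadj, hdist⟩, huniq⟩ := existsUnique_adj_dist_add_one_eq E.tree hω.symm
  obtain ⟨a, ha, rfl⟩ := E.adj_pos_iff.1 hadj
  exact ⟨a, ⟨ha, hdist⟩, fun b ⟨hb, hbdist⟩ =>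
    mul_right_cancel (huniq _ ⟨E.adj_pos_iff.2 ⟨b, hb, rfl⟩, hbdist⟩)⟩

theorem gammaStep_spec {n : ℕ} {ω : Ω} (hω : E.pos n ω ≠ 1) :
    E.gammaStep n ω ∈ E.S ∧
      (cayleyGraph E.S).dist 1 (E.gammaStep n ω * E.pos n ω) + 1 = E.dist n ω :=
  Classical.epsilon_spec (E.existsUnique_step_dist_add_one_eq hω).exists

theorem dist_succ_lt_iff {n : ℕ} {ω : Ω} (hω : E.pos n ω ≠ 1) :
    E.dist (n + 1) ω < E.dist n ω ↔ E.g (n + 1) ω = E.gammaStep n ω := by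
  constructor
  · intro hlt
    have hdist : E.dist (n + 1) ω + 1 = E.dist n ω := by
      rcases E.dist_succ_eq_or n ω with h | h <;> omega
    exact (E.existsUnique_step_dist_add_one_eq hω).unique
      ⟨E.mem_S _ n.succ_pos ω, hdist⟩ (E.gammaStep_spec hω)
  · intro hstep
    have hdist := (E.gammaStep_spec hω).2
    rw [← hstep] at hdist
    exact Nat.lt_of_succ_le hdist.le

theorem backtrack_eq (n : ℕ) (ω : Ω) :
    E.backtrack n ω =
      (1 - E.atRoot n ω) * (if E.g (n + 1) ω = E.gammaStep n ω then 1 else 0) := by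
  by_cases hω : E.pos n ω = 1
  · simp [backtrack, atRoot, dist, hω]
  · simp [backtrack, atRoot, hω, E.dist_succ_lt_iff hω]

theorem atRoot_zero (ω : Ω) : E.atRoot 0 ω = 1 := if_pos rfl

theorem integral_mul_backtrack [IsFiniteMeasure P] {n : ℕ} {f : Ω → ℝ}
    (hf : f.FactorsThrough (E.history n)) :
    ∫ ω, f ω * E.backtrack n ω ∂P = ∫ ω, f ω * E.backtrackProb n ω ∂P := by
  simp only [backtrack_eq, backtrackProb]
  rcases n.eq_zero_or_pos with rfl | hn
  · simp [atRoot_zero]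
  simp only [← mul_assoc]
  refine E.integral_mul_step_eq hn (E.gammaStep_factorsThrough n)
    (fun _ _ h => by simp only [hf h, E.atRoot_factorsThrough n h]) fun ω hω => ?_
  refine (E.gammaStep_spec fun hroot => hω ?_).1
  simp [atRoot, hroot]

theorem abs_backtrack_sub_backtrackProb_le (hd : 1 < d) (hp0 : 0 ≤ p) (hp1 : p ≤ 1) (n : ℕ)
    (ω : Ω) : |E.backtrack n ω - E.backtrackProb n ω| ≤ 1 := by
  obtain ⟨h0, h1⟩ := E.stepProb_mem_Icc hd hp0 hp1 (E.gammaStep n ω) n ω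
  rw [backtrack_eq, backtrackProb, atRoot, abs_le]
  split_ifs <;> constructor <;> linarith

/-- The martingale part of the number of backtracking steps among the first `n` steps. -/
def backtrackMartingale (E : ERW G d p Ω P) (n : ℕ) (ω : Ω) : ℝ :=
  ∑ k ∈ Finset.range n, (E.backtrack k ω - E.backtrackProb k ω)

theorem backtrack_sub_backtrackProb_factorsThrough (n : ℕ) :
    (fun ω => E.backtrack n ω - E.backtrackProb n ω).FactorsThrough (E.history (n + 1)) :=
  fun _ _ h => by
    simp only [E.backtrack_factorsThrough n h,
      E.backtrackProb_factorsThrough n (history_factorsThrough_of_le n.le_succ h)]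

theorem backtrackMartingale_factorsThrough (n : ℕ) :
    (E.backtrackMartingale n).FactorsThrough (E.history n) := fun _ _ h =>
  Finset.sum_congr rfl fun k hk => E.backtrack_sub_backtrackProb_factorsThrough k
    (history_factorsThrough_of_le (Finset.mem_range.1 hk) h)

theorem integral_backtrackMartingale_mul_increment [IsFiniteMeasure P] (n : ℕ) :
    ∫ ω, E.backtrackMartingale n ω * (E.backtrack n ω - E.backtrackProb n ω) ∂P = 0 := by
  have hM := E.backtrackMartingale_factorsThrough n
  have integrable_backtrack : Integrable (fun ω => E.backtrackMartingale n ω * E.backtrack n ω) P :=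
    integrable_of_factorsThrough_history (E := E) (n := n + 1) fun _ _ h => by
      simp only [hM (history_factorsThrough_of_le n.le_succ h), E.backtrack_factorsThrough n h]
  have integrable_prob : Integrable
      (fun ω => E.backtrackMartingale n ω * E.backtrackProb n ω) P :=
    integrable_of_factorsThrough_history (E := E) (n := n) fun _ _ h => by
      simp only [hM h, E.backtrackProb_factorsThrough n h]
  simp only [mul_sub]
  rw [integral_sub integrable_backtrack integrable_prob, E.integral_mul_backtrack hM, sub_self]

theorem integral_abs_backtrackMartingale_le [IsProbabilityMeasure P] (hd : 1 < d) (hp0 : 0 ≤ p)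
    (hp1 : p ≤ 1) (n : ℕ) : ∫ ω, |E.backtrackMartingale n ω| ∂P ≤ √n := by
  have memLp_increment (k : ℕ) : MemLp (fun ω => E.backtrack k ω - E.backtrackProb k ω) 2 P :=
    memLp_of_factorsThrough_history (E.backtrack_sub_backtrackProb_factorsThrough k) 2
  refine (integral_abs_le_sqrt_integral_sq (memLp_of_factorsThrough_history
    (E.backtrackMartingale_factorsThrough n) 2)).trans (Real.sqrt_le_sqrt ?_)
  calc ∫ ω, E.backtrackMartingale n ω ^ 2 ∂P
      = ∑ k ∈ Finset.range n, ∫ ω, (E.backtrack k ω - E.backtrackProb k ω) ^ 2 ∂P :=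
        integral_sq_sum_range_of_orthogonal memLp_increment
          E.integral_backtrackMartingale_mul_increment n
    _ ≤ ∑ k ∈ Finset.range n, 1 := by
        refine Finset.sum_le_sum fun k _ => ?_
        simpa using integral_mono (memLp_increment k).integrable_sq (integrable_const 1) fun ω =>
          (sq_le_one_iff_abs_le_one _).2 (E.abs_backtrack_sub_backtrackProb_le hd hp0 hp1 k ω)
    _ = n := by simp

end Backtracking

section Imbalance

/-- The `ℓ¹` deviation of the empirical step distribution from the uniform distribution on the
generators. By the convention `x / 0 = 0` it vanishes at time `0`. -/
def imbalance (E : ERW G d p Ω P) (n : ℕ) (ω : Ω) : ℝ :=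
  (∑ a ∈ E.S, |E.centeredCount a n ω|) / n

variable (E : ERW G d p Ω P)

theorem imbalance_zero (ω : Ω) : E.imbalance 0 ω = 0 := by simp [imbalance]

theorem imbalance_nonneg (n : ℕ) (ω : Ω) : 0 ≤ E.imbalance n ω := by
  unfold imbalance
  positivity

theorem integrable_imbalance [IsFiniteMeasure P] (n : ℕ) : Integrable (E.imbalance n) P :=
  integrable_of_factorsThrough_history (E := E) (n := n) fun _ _ h => by
    simp only [imbalance, E.centeredCount_factorsThrough _ n h]

theorem abs_backtrackProb_sub_le_imbalance (hd : 1 < d) (hp0 : 0 ≤ p) (hp1 : p ≤ 1) (n : ℕ)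
    (ω : Ω) : |E.backtrackProb n ω - (1 - E.atRoot n ω) / d| ≤ E.imbalance n ω := by
  by_cases hω : E.pos n ω = 1
  · simp [backtrackProb, atRoot, hω, E.imbalance_nonneg]
  have hn : 1 ≤ n := Nat.one_le_iff_ne_zero.2 fun h => hω (by subst h; rfl)
  set γ := E.gammaStep n ω
  have difference_eq : E.backtrackProb n ω - (1 - E.atRoot n ω) / d =
      memoryExponent d p * (E.centeredCount γ n ω / n) := by
    simp only [backtrackProb, atRoot, hω, if_false, E.stepProb_eq hd hn]
    ring
  calc |E.backtrackProb n ω - (1 - E.atRoot n ω) / d|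
      = |memoryExponent d p| * (|E.centeredCount γ n ω| / n) := by
        rw [difference_eq, abs_mul, abs_div, Nat.abs_cast]
    _ ≤ |E.centeredCount γ n ω| / n :=
        mul_le_of_le_one_left (by positivity) (abs_memoryExponent_le_one hd hp0 hp1)
    _ ≤ E.imbalance n ω := by
        unfold imbalance
        gcongr
        exact Finset.single_le_sum (f := fun a => |E.centeredCount a n ω|)
          (fun _ _ => abs_nonneg _) (E.gammaStep_spec hω).1

theorem integral_imbalance_le [IsProbabilityMeasure P] {n : ℕ} (hn : 1 ≤ n) {A β : ℝ}
    (hA : ∀ a ∈ E.S, ∫ ω, E.centeredCount a n ω ^ 2 ∂P ≤ A * (n : ℝ) ^ (2 * β)) :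
    ∫ ω, E.imbalance n ω ∂P ≤ d * √A * (n : ℝ) ^ (β - 1) := by
  have hn' : (0 : ℝ) < n := by exact_mod_cast hn
  have sqrt_rpow : √((n : ℝ) ^ (2 * β)) = (n : ℝ) ^ β := by
    rw [mul_comm, Real.rpow_mul hn'.le, Real.rpow_two, Real.sqrt_sq (by positivity)]
  have mean_abs_le (a : G) (ha : a ∈ E.S) :
      ∫ ω, |E.centeredCount a n ω| ∂P ≤ √A * (n : ℝ) ^ β := by
    calc ∫ ω, |E.centeredCount a n ω| ∂P ≤ √(∫ ω, E.centeredCount a n ω ^ 2 ∂P) :=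
        integral_abs_le_sqrt_integral_sq (E.memLp_centeredCount a n)
      _ ≤ √(A * (n : ℝ) ^ (2 * β)) := Real.sqrt_le_sqrt (hA a ha)
      _ = √A * (n : ℝ) ^ β := by rw [Real.sqrt_mul' _ (by positivity), sqrt_rpow]
  calc ∫ ω, E.imbalance n ω ∂P = (∑ a ∈ E.S, ∫ ω, |E.centeredCount a n ω| ∂P) / n := by
        simp only [imbalance]
        rw [integral_div, integral_finsetSum _ fun a _ =>
          ((E.memLp_centeredCount a n).integrable one_le_two).abs]
    _ ≤ (∑ _a ∈ E.S, √A * (n : ℝ) ^ β) / n := by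
        gcongr with _ ha
        exact mean_abs_le _ ha
    _ = d * √A * (n : ℝ) ^ (β - 1) := by
        rw [Finset.sum_const, E.card_S, nsmul_eq_mul, Real.rpow_sub_one hn'.ne']
        ring

theorem sum_integral_imbalance_le [IsProbabilityMeasure P] {n : ℕ} {A β : ℝ} (hβ : 0 < β)
    (hβ1 : β ≤ 1) (hA : ∀ k : ℕ, 1 ≤ k → k ≤ n → ∀ a ∈ E.S,
      ∫ ω, E.centeredCount a k ω ^ 2 ∂P ≤ A * (k : ℝ) ^ (2 * β)) :
    ∑ k ∈ Finset.range n, ∫ ω, E.imbalance k ω ∂P ≤ d * √A * ((n : ℝ) ^ β / β) := by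
  calc ∑ k ∈ Finset.range n, ∫ ω, E.imbalance k ω ∂P
      ≤ ∑ k ∈ Finset.range (n + 1), ∫ ω, E.imbalance k ω ∂P :=
        Finset.sum_le_sum_of_subset_of_nonneg (Finset.range_subset_range.2 n.le_succ)
          fun k _ _ => integral_nonneg (E.imbalance_nonneg k)
    _ = ∑ k ∈ Finset.range n, ∫ ω, E.imbalance (k + 1) ω ∂P := by
        simp [Finset.sum_range_succ', imbalance_zero]
    _ ≤ ∑ k ∈ Finset.range n, d * √A * ((k + 1 : ℕ) : ℝ) ^ (β - 1) :=
        Finset.sum_le_sum fun k hk => E.integral_imbalance_le k.succ_pos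
          (hA (k + 1) k.succ_pos (Finset.mem_range.1 hk))
    _ ≤ d * √A * ((n : ℝ) ^ β / β) := by
        rw [← Finset.mul_sum]
        gcongr
        exact sum_range_rpow_sub_one_le hβ hβ1 n

end Imbalance

section Returns

/-- The function `x ↦ (d - 1)⁻¹ ^ ρ(x, e)` along the walk. For balanced steps it is harmonic off
the root and drops by `(d - 2) / (d - 1)` in mean at each visit to the root, which makes it a
counter of these visits. -/
def rootPotential (E : ERW G d p Ω P) (n : ℕ) (ω : Ω) : ℝ :=
  ((d : ℝ) - 1)⁻¹ ^ E.dist n ω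

variable (E : ERW G d p Ω P)

theorem integrable_atRoot [IsFiniteMeasure P] (n : ℕ) : Integrable (E.atRoot n) P :=
  integrable_of_factorsThrough_history (E.atRoot_factorsThrough n)

theorem rootPotential_factorsThrough (n : ℕ) : (E.rootPotential n).FactorsThrough (E.history n) :=
  fun _ _ h => by simp only [rootPotential, E.dist_factorsThrough n h]

theorem integrable_rootPotential [IsFiniteMeasure P] (n : ℕ) : Integrable (E.rootPotential n) P :=
  integrable_of_factorsThrough_history (E.rootPotential_factorsThrough n)

theorem rootPotential_zero (ω : Ω) : E.rootPotential 0 ω = 1 := by simp [rootPotential, dist, pos]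

theorem rootPotential_mem_Icc (hd : 1 < d) (n : ℕ) (ω : Ω) :
    E.rootPotential n ω ∈ Set.Icc (0 : ℝ) 1 := by
  have hd' : (1 : ℝ) ≤ d - 1 := by
    rw [le_sub_iff_add_le]
    exact_mod_cast hd
  have base_nonneg : 0 ≤ ((d : ℝ) - 1)⁻¹ := by positivity
  exact ⟨pow_nonneg base_nonneg _, pow_le_one₀ base_nonneg (inv_le_one_of_one_le₀ hd')⟩

theorem rootPotential_succ (hd : 1 < d) (n : ℕ) (ω : Ω) :
    E.rootPotential (n + 1) ω = ((d : ℝ) - 1)⁻¹ * E.rootPotential n ω +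
      ((d : ℝ) - 1 - ((d : ℝ) - 1)⁻¹) * (E.rootPotential n ω * E.backtrack n ω) := by
  have hd1 : (d : ℝ) - 1 ≠ 0 := sub_ne_zero.2 (by exact_mod_cast hd.ne')
  rcases E.dist_succ_eq_or n ω with h | h
  · have hlt : E.dist (n + 1) ω < E.dist n ω := by omega
    rw [backtrack, if_pos hlt, rootPotential, rootPotential, h, pow_succ]
    field_simp
    ring
  · have hle : ¬E.dist (n + 1) ω < E.dist n ω := by omega
    rw [backtrack, if_neg hle, rootPotential, rootPotential, h, pow_succ]
    ring

theorem integral_rootPotential_succ [IsFiniteMeasure P] (hd : 1 < d) (n : ℕ) :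
    ∫ ω, E.rootPotential (n + 1) ω ∂P =
      ∫ ω, (((d : ℝ) - 1)⁻¹ * E.rootPotential n ω +
        ((d : ℝ) - 1 - ((d : ℝ) - 1)⁻¹) * (E.rootPotential n ω * E.backtrackProb n ω)) ∂P := by
  have hφ := E.rootPotential_factorsThrough n
  have integrable_backtrack : Integrable (fun ω => E.rootPotential n ω * E.backtrack n ω) P :=
    integrable_of_factorsThrough_history (E := E) (n := n + 1) fun _ _ h => by
      simp only [hφ (history_factorsThrough_of_le n.le_succ h), E.backtrack_factorsThrough n h]
  have integrable_prob : Integrable (fun ω => E.rootPotential n ω * E.backtrackProb n ω) P :=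
    integrable_of_factorsThrough_history (E := E) (n := n) fun _ _ h => by
      simp only [hφ h, E.backtrackProb_factorsThrough n h]
  simp only [E.rootPotential_succ hd]
  rw [integral_add ((E.integrable_rootPotential n).const_mul _) (integrable_backtrack.const_mul _),
    integral_add ((E.integrable_rootPotential n).const_mul _) (integrable_prob.const_mul _),
    integral_const_mul _ fun ω => E.rootPotential n ω * E.backtrack n ω,
    E.integral_mul_backtrack hφ, integral_const_mul _ fun ω => _ * E.backtrackProb n ω]

theorem rootPotential_mean_step_le (hd : 3 ≤ d) (hp0 : 0 ≤ p) (hp1 : p ≤ 1) (n : ℕ) (ω : Ω) :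
    ((d : ℝ) - 1)⁻¹ * E.rootPotential n ω +
        ((d : ℝ) - 1 - ((d : ℝ) - 1)⁻¹) * (E.rootPotential n ω * E.backtrackProb n ω) ≤
      E.rootPotential n ω - 1 / 2 * E.atRoot n ω + (d - 1) * E.imbalance n ω := by
  set φ := E.rootPotential n ω with hφ
  set q := ((d : ℝ) - 1)⁻¹ with hq
  have hd' : (3 : ℝ) ≤ d := by exact_mod_cast hd
  have hd1 : (0 : ℝ) ≤ d - 1 := by linarith
  have hq0 : 0 ≤ q := inv_nonneg.2 hd1
  have hq1 : q ≤ 1 / 2 := by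
    rw [hq, ← one_div]
    exact one_div_le_one_div_of_le two_pos (by linarith)
  have hW := E.imbalance_nonneg n ω
  by_cases hω : E.pos n ω = 1
  · have hφ1 : φ = 1 := by simp [hφ, rootPotential, dist, hω]
    simp only [hφ1, backtrackProb, atRoot, hω, if_true, sub_self, zero_mul, mul_zero]
    nlinarith
  have hclose := (abs_le.1 (E.abs_backtrackProb_sub_le_imbalance (by omega) hp0 hp1 n ω)).2
  simp only [atRoot, hω, if_false, sub_zero, mul_zero] at hclose ⊢
  obtain ⟨hφ0, hφ1⟩ := E.rootPotential_mem_Icc (by omega) n ω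
  have balanced : q + ((d : ℝ) - 1 - q) * (1 / d) = 1 := by
    have : (d : ℝ) - 1 ≠ 0 := by linarith
    rw [hq]
    field_simp
    ring
  have bracket_le : q + ((d : ℝ) - 1 - q) * E.backtrackProb n ω ≤
      1 + (d - 1) * E.imbalance n ω := by
    nlinarith
  calc q * φ + ((d : ℝ) - 1 - q) * (φ * E.backtrackProb n ω)
      = φ * (q + ((d : ℝ) - 1 - q) * E.backtrackProb n ω) := by ring
    _ ≤ φ * (1 + (d - 1) * E.imbalance n ω) := by gcongr
    _ = φ + φ * ((d - 1) * E.imbalance n ω) := by ring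
    _ ≤ φ + (d - 1) * E.imbalance n ω :=
        add_le_add le_rfl (mul_le_of_le_one_left (mul_nonneg hd1 hW) hφ1)

theorem half_integral_atRoot_le [IsFiniteMeasure P] (hd : 3 ≤ d) (hp0 : 0 ≤ p) (hp1 : p ≤ 1)
    (n : ℕ) :
    1 / 2 * ∫ ω, E.atRoot n ω ∂P ≤
      ∫ ω, E.rootPotential n ω ∂P - ∫ ω, E.rootPotential (n + 1) ω ∂P +
        (d - 1) * ∫ ω, E.imbalance n ω ∂P := by
  have integrable_atRoot := (E.integrable_atRoot n).const_mul (1 / 2)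
  have integrable_drop : Integrable (fun ω => E.rootPotential n ω - 1 / 2 * E.atRoot n ω) P :=
    (E.integrable_rootPotential n).sub integrable_atRoot
  have integrable_imbalance := (E.integrable_imbalance n).const_mul ((d : ℝ) - 1)
  have supermartingale : ∫ ω, E.rootPotential (n + 1) ω ∂P ≤
      ∫ ω, (E.rootPotential n ω - 1 / 2 * E.atRoot n ω + (d - 1) * E.imbalance n ω) ∂P := by
    rw [E.integral_rootPotential_succ (by omega) n]
    refine integral_mono (integrable_of_factorsThrough_history (E := E) (n := n) fun _ _ h => ?_)
      (integrable_drop.add integrable_imbalance) (E.rootPotential_mean_step_le hd hp0 hp1 n)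
    simp only [E.rootPotential_factorsThrough n h, E.backtrackProb_factorsThrough n h]
  rw [integral_add integrable_drop integrable_imbalance,
    integral_sub (E.integrable_rootPotential n) integrable_atRoot, integral_const_mul,
    integral_const_mul] at supermartingale
  linarith

theorem sum_integral_atRoot_le [IsProbabilityMeasure P] (hd : 3 ≤ d) (hp0 : 0 ≤ p) (hp1 : p ≤ 1)
    (n : ℕ) : ∑ k ∈ Finset.range n, ∫ ω, E.atRoot k ω ∂P ≤
      2 + 2 * (d - 1) * ∑ k ∈ Finset.range n, ∫ ω, E.imbalance k ω ∂P := by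
  have potential_nonneg : 0 ≤ ∫ ω, E.rootPotential n ω ∂P :=
    integral_nonneg fun ω => (E.rootPotential_mem_Icc (by omega) n ω).1
  have potential_zero : ∫ ω, E.rootPotential 0 ω ∂P = 1 := by simp [rootPotential_zero]
  have telescoped := Finset.sum_le_sum fun k (_ : k ∈ Finset.range n) =>
    E.half_integral_atRoot_le hd hp0 hp1 k
  rw [Finset.sum_add_distrib, ← Finset.mul_sum, ← Finset.mul_sum,
    Finset.sum_range_sub' fun k => ∫ ω, E.rootPotential k ω ∂P] at telescoped
  linarith

end Returns

section Speed

/-- The mean absolute deviation of the empirical speed `Δ n / n` from `(d - 2) / d`. -/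
def meanDeviation (E : ERW G d p Ω P) (n : ℕ) : ℝ :=
  ∫ ω, |(E.dist n ω : ℝ) / n - ((d : ℝ) - 2) / d| ∂P

variable (E : ERW G d p Ω P)

theorem dist_eq_sub_sum_backtrack (n : ℕ) (ω : Ω) :
    (E.dist n ω : ℝ) = n - 2 * ∑ k ∈ Finset.range n, E.backtrack k ω := by
  induction n with
  | zero => simp [dist, pos]
  | succ n ih =>
    rw [E.dist_succ, ih, Finset.sum_range_succ]
    push_cast
    ring

theorem dist_sub_eq (hd : 1 < d) (n : ℕ) (ω : Ω) :
    (E.dist n ω : ℝ) - n * (((d : ℝ) - 2) / d) =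
      2 / d * ∑ k ∈ Finset.range n, E.atRoot k ω -
        2 * ∑ k ∈ Finset.range n, (E.backtrackProb k ω - (1 - E.atRoot k ω) / d) -
          2 * E.backtrackMartingale n ω := by
  have hd0 : (d : ℝ) ≠ 0 := by positivity
  rw [dist_eq_sub_sum_backtrack, backtrackMartingale]
  simp only [Finset.sum_sub_distrib, ← Finset.sum_div, Finset.sum_const, Finset.card_range,
    nsmul_eq_mul, mul_one]
  field_simp
  ring

theorem abs_dist_sub_le (hd : 1 < d) (hp0 : 0 ≤ p) (hp1 : p ≤ 1) (n : ℕ) (ω : Ω) :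
    |(E.dist n ω : ℝ) - n * (((d : ℝ) - 2) / d)| ≤
      2 / d * ∑ k ∈ Finset.range n, E.atRoot k ω + 2 * ∑ k ∈ Finset.range n, E.imbalance k ω +
        2 * |E.backtrackMartingale n ω| := by
  have atRoot_nonneg : 0 ≤ ∑ k ∈ Finset.range n, E.atRoot k ω :=
    Finset.sum_nonneg fun k _ => by unfold atRoot; split_ifs <;> norm_num
  have prob_close :
      |∑ k ∈ Finset.range n, (E.backtrackProb k ω - (1 - E.atRoot k ω) / d)| ≤
        ∑ k ∈ Finset.range n, E.imbalance k ω :=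
    (Finset.abs_sum_le_sum_abs _ _).trans
      (Finset.sum_le_sum fun k _ => E.abs_backtrackProb_sub_le_imbalance hd hp0 hp1 k ω)
  rw [E.dist_sub_eq hd]
  refine (abs_sub _ _).trans (add_le_add ((abs_sub _ _).trans (add_le_add ?_ ?_)) ?_)
  · rw [abs_of_nonneg (by positivity)]
  · rw [abs_mul, abs_two]
    gcongr
  · rw [abs_mul, abs_two]

theorem integrable_dist [IsFiniteMeasure P] (n : ℕ) : Integrable (fun ω => (E.dist n ω : ℝ)) P :=
  integrable_of_factorsThrough_history (E := E) (n := n) fun _ _ h => by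
    simp only [E.dist_factorsThrough n h]

theorem integral_abs_dist_sub_le [IsProbabilityMeasure P] (hd : 3 ≤ d) (hp0 : 0 ≤ p) (hp1 : p ≤ 1)
    (n : ℕ) :
    ∫ ω, |(E.dist n ω : ℝ) - n * (((d : ℝ) - 2) / d)| ∂P ≤
      2 + 6 * ∑ k ∈ Finset.range n, ∫ ω, E.imbalance k ω ∂P + 2 * √n := by
  have hd2 : 1 < d := by omega
  have hd' : (3 : ℝ) ≤ d := by exact_mod_cast hd
  have integrable_roots : Integrable (fun ω => 2 / d * ∑ k ∈ Finset.range n, E.atRoot k ω) P :=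
    (integrable_finsetSum _ fun k _ => E.integrable_atRoot k).const_mul _
  have integrable_imbalances : Integrable (fun ω => 2 * ∑ k ∈ Finset.range n, E.imbalance k ω) P :=
    (integrable_finsetSum _ fun k _ => E.integrable_imbalance k).const_mul _
  have integrable_martingale : Integrable (fun ω => 2 * |E.backtrackMartingale n ω|) P :=
    (integrable_of_factorsThrough_history (E.backtrackMartingale_factorsThrough n)).abs.const_mul _
  have integrable_sum : Integrable (fun ω => 2 / d * ∑ k ∈ Finset.range n, E.atRoot k ω +
      2 * ∑ k ∈ Finset.range n, E.imbalance k ω) P := integrable_roots.add integrable_imbalances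
  set w := ∑ k ∈ Finset.range n, ∫ ω, E.imbalance k ω ∂P
  have hw : 0 ≤ w := Finset.sum_nonneg fun k _ => integral_nonneg (E.imbalance_nonneg k)
  calc ∫ ω, |(E.dist n ω : ℝ) - n * (((d : ℝ) - 2) / d)| ∂P
      ≤ ∫ ω, (2 / d * ∑ k ∈ Finset.range n, E.atRoot k ω +
          2 * ∑ k ∈ Finset.range n, E.imbalance k ω + 2 * |E.backtrackMartingale n ω|) ∂P :=
        integral_mono ((E.integrable_dist n).sub (integrable_const _)).abs
          (integrable_sum.add integrable_martingale) (E.abs_dist_sub_le hd2 hp0 hp1 n)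
    _ = 2 / d * ∑ k ∈ Finset.range n, ∫ ω, E.atRoot k ω ∂P + 2 * w +
          2 * ∫ ω, |E.backtrackMartingale n ω| ∂P := by
        rw [integral_add integrable_sum integrable_martingale,
          integral_add integrable_roots integrable_imbalances, integral_const_mul,
          integral_const_mul, integral_const_mul,
          integral_finsetSum _ fun k _ => E.integrable_atRoot k,
          integral_finsetSum _ fun k _ => E.integrable_imbalance k]
    _ ≤ 2 / d * (2 + 2 * (d - 1) * w) + 2 * w + 2 * √n := by
        gcongr
        · exact E.sum_integral_atRoot_le hd hp0 hp1 n
        · exact E.integral_abs_backtrackMartingale_le hd2 hp0 hp1 n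
    _ = 4 / d + (6 - 4 / d) * w + 2 * √n := by field_simp; ring
    _ ≤ 2 + 6 * w + 2 * √n := by
        have : (4 : ℝ) / d ≤ 2 := by rw [div_le_iff₀ (by linarith)]; linarith
        gcongr
        exact sub_le_self _ (by positivity)

theorem meanDeviation_eq {n : ℕ} (hn : 1 ≤ n) :
    E.meanDeviation n = (∫ ω, |(E.dist n ω : ℝ) - n * (((d : ℝ) - 2) / d)| ∂P) / n := by
  have hn' : (0 : ℝ) < n := by exact_mod_cast hn
  rw [meanDeviation, ← integral_div]
  congr with ω
  rw [← abs_of_pos hn', ← abs_div, abs_of_pos hn', sub_div (E.dist n ω : ℝ),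
    mul_div_cancel_left₀ _ hn'.ne']

theorem meanDeviation_le [IsProbabilityMeasure P] (hd : 3 ≤ d) (hp0 : 0 ≤ p) (hp1 : p ≤ 1)
    {n : ℕ} (hn : 1 ≤ n) {A β : ℝ} (hA1 : 1 ≤ A) (hβ : 1 / 2 ≤ β) (hβ1 : β ≤ 1)
    (hA : ∀ k : ℕ, 1 ≤ k → k ≤ n → ∀ a ∈ E.S,
      ∫ ω, E.centeredCount a k ω ^ 2 ∂P ≤ A * (k : ℝ) ^ (2 * β)) :
    E.meanDeviation n ≤ (4 + 12 * d) * √A * (n : ℝ) ^ (β - 1) := by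
  have hn' : (1 : ℝ) ≤ n := by exact_mod_cast hn
  have one_le_sqrt : 1 ≤ √A := Real.one_le_sqrt.2 hA1
  have one_le_rpow : 1 ≤ (n : ℝ) ^ β := Real.one_le_rpow hn' (by linarith)
  have sqrt_le_rpow : √n ≤ (n : ℝ) ^ β := by
    rw [Real.sqrt_eq_rpow]
    exact Real.rpow_le_rpow_of_exponent_le hn' hβ
  have rpow_div_le : (n : ℝ) ^ β / β ≤ 2 * (n : ℝ) ^ β := by
    rw [div_le_iff₀ (by linarith)]
    nlinarith
  rw [E.meanDeviation_eq hn, Real.rpow_sub_one (by positivity)]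
  refine (div_le_div_of_nonneg_right ?_ n.cast_nonneg).trans_eq (mul_div_assoc _ _ _)
  calc ∫ ω, |(E.dist n ω : ℝ) - n * (((d : ℝ) - 2) / d)| ∂P
      ≤ 2 + 6 * ∑ k ∈ Finset.range n, ∫ ω, E.imbalance k ω ∂P + 2 * √n :=
        E.integral_abs_dist_sub_le hd hp0 hp1 n
    _ ≤ 2 * (n : ℝ) ^ β + 6 * (d * √A * (2 * (n : ℝ) ^ β)) + 2 * (n : ℝ) ^ β := by
        gcongr
        · linarith
        · refine (E.sum_integral_imbalance_le (by linarith) hβ1 hA).trans ?_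
          gcongr
    _ = (4 + 12 * d * √A) * (n : ℝ) ^ β := by ring
    _ ≤ (4 + 12 * d) * √A * (n : ℝ) ^ β := by
        gcongr
        linarith

end Speed

section Regimes

theorem memoryExponent_lt_half_iff (hd : 1 < d) :
    memoryExponent d p < 1 / 2 ↔ p < ((d : ℝ) + 1) / (2 * d) := by
  have hd' : (1 : ℝ) < d := by exact_mod_cast hd
  rw [memoryExponent, div_lt_iff₀ (by linarith), lt_div_iff₀ (by linarith)]
  constructor <;> intro h <;> linarith

theorem memoryExponent_eq_half_iff (hd : 1 < d) :
    memoryExponent d p = 1 / 2 ↔ p = ((d : ℝ) + 1) / (2 * d) := by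
  have hd' : (1 : ℝ) < d := by exact_mod_cast hd
  rw [memoryExponent, div_eq_iff (by linarith), eq_div_iff (by linarith)]
  constructor <;> intro h <;> linarith

theorem one_sub_memoryExponent (hd : 1 < d) :
    1 - memoryExponent d p = (d : ℝ) * (1 - p) / ((d : ℝ) - 1) := by
  have hd1 : (d : ℝ) - 1 ≠ 0 := sub_ne_zero.2 (by exact_mod_cast hd.ne')
  rw [memoryExponent, one_sub_div hd1]
  ring

theorem rate_of_memoryExponent_lt (hd : 1 < d) (hα : memoryExponent d p < 1 / 2) (n : ℕ) :
    rate p d n = √n := if_pos ((memoryExponent_lt_half_iff hd).1 hα)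

theorem rate_of_memoryExponent_eq (hd : 1 < d) (hα : memoryExponent d p = 1 / 2) (n : ℕ) :
    rate p d n = √(n / Real.log n) := by
  have hp := (memoryExponent_eq_half_iff hd).1 hα
  rw [rate, if_neg hp.not_lt, if_pos hp]

theorem rate_of_lt_memoryExponent (hd : 1 < d) (hα : 1 / 2 < memoryExponent d p) (n : ℕ) :
    rate p d n = (n : ℝ) ^ (1 - memoryExponent d p) := by
  rw [rate, if_neg fun h => hα.not_gt ((memoryExponent_lt_half_iff hd).2 h),
    if_neg fun h => hα.ne' ((memoryExponent_eq_half_iff hd).2 h), one_sub_memoryExponent hd]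

theorem rate_nonneg (p : ℝ) (d n : ℕ) : 0 ≤ rate p d n := by
  unfold rate
  split_ifs <;> positivity

variable [IsProbabilityMeasure P] (E : ERW G d p Ω P)

theorem rate_mul_meanDeviation_le_of_memoryExponent_lt (hd : 3 ≤ d) (hp0 : 0 ≤ p) (hp1 : p ≤ 1)
    (hα : memoryExponent d p < 1 / 2) {n : ℕ} (hn : 1 ≤ n) :
    rate p d n * E.meanDeviation n ≤
      (4 + 12 * d) * √(1 + 1 / (1 - 2 * memoryExponent d p)) := by
  have hgap : 0 < 1 - 2 * memoryExponent d p := by linarith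
  have deviation_le := E.meanDeviation_le hd hp0 hp1 hn (β := 1 / 2)
    (le_add_of_nonneg_right (one_div_pos.2 hgap).le) le_rfl (by norm_num) fun k hk _ a ha => by
      simpa using E.integral_sq_centeredCount_le_of_memoryExponent_lt hd hp0 hα ha hk
  rw [rate_of_memoryExponent_lt (by omega) hα]
  refine (mul_le_mul_of_nonneg_left deviation_le (Real.sqrt_nonneg _)).trans_eq ?_
  rw [mul_left_comm, sqrt_mul_rpow_half_sub_one (by exact_mod_cast hn), mul_one]

theorem rate_mul_meanDeviation_le_of_memoryExponent_eq (hd : 3 ≤ d) (hp0 : 0 ≤ p) (hp1 : p ≤ 1)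
    (hα : memoryExponent d p = 1 / 2) {n : ℕ} (hn : 1 ≤ n) :
    rate p d n * E.meanDeviation n ≤ (4 + 12 * d) * √3 := by
  have deviation_le := E.meanDeviation_le hd hp0 hp1 hn (A := 1 + Real.log n) (β := 1 / 2)
    (le_add_of_nonneg_right (Real.log_natCast_nonneg n)) le_rfl (by norm_num)
    fun k hk hkn a ha => by
      refine (E.integral_sq_centeredCount_le_of_memoryExponent_eq (by omega) hα ha hk).trans ?_
      rw [mul_one_div_cancel two_ne_zero, Real.rpow_one]
      gcongr
  rw [rate_of_memoryExponent_eq (by omega) hα]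
  calc √(n / Real.log n) * E.meanDeviation n
      ≤ √(n / Real.log n) *
          ((4 + 12 * d) * √(1 + Real.log n) * (n : ℝ) ^ ((1 : ℝ) / 2 - 1)) := by gcongr
    _ = (4 + 12 * d) * (√(n / Real.log n) * √(1 + Real.log n)) *
          (n : ℝ) ^ ((1 : ℝ) / 2 - 1) := by ring
    _ ≤ (4 + 12 * d) * (√3 * √n) * (n : ℝ) ^ ((1 : ℝ) / 2 - 1) := by
        gcongr (4 + 12 * d) * ?_ * _
        exact sqrt_div_log_mul_sqrt_one_add_log_le hn
    _ = (4 + 12 * d) * √3 := by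
        rw [← mul_assoc, mul_assoc _ √(n : ℝ), sqrt_mul_rpow_half_sub_one (by exact_mod_cast hn),
          mul_one]

theorem rate_mul_meanDeviation_le_of_lt_memoryExponent (hd : 3 ≤ d) (hp0 : 0 ≤ p) (hp1 : p ≤ 1)
    (hα : 1 / 2 < memoryExponent d p) {n : ℕ} (hn : 1 ≤ n) :
    rate p d n * E.meanDeviation n ≤
      (4 + 12 * d) * √(1 + 1 / (2 * memoryExponent d p - 1)) := by
  have hn' : (0 : ℝ) < n := by exact_mod_cast hn
  have hd2 : 1 < d := by omega
  have hgap : 0 < 2 * memoryExponent d p - 1 := by linarith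
  have deviation_le := E.meanDeviation_le hd hp0 hp1 hn
    (le_add_of_nonneg_right (one_div_pos.2 hgap).le) hα.le (memoryExponent_le_one hd2 hp1)
    fun k hk _ a ha => E.integral_sq_centeredCount_le_of_lt_memoryExponent hd2 hα ha hk
  have cancel : (n : ℝ) ^ (1 - memoryExponent d p) * (n : ℝ) ^ (memoryExponent d p - 1) = 1 := by
    rw [← Real.rpow_add hn']
    norm_num
  rw [rate_of_lt_memoryExponent hd2 hα]
  refine (mul_le_mul_of_nonneg_left deviation_le (by positivity)).trans_eq ?_
  rw [mul_left_comm, cancel, mul_one]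

theorem exists_forall_rate_mul_meanDeviation_le (hd : 3 ≤ d) (hp0 : 0 ≤ p) (hp1 : p ≤ 1) :
    ∃ C, ∀ n, 1 ≤ n → rate p d n * E.meanDeviation n ≤ C := by
  rcases lt_trichotomy (memoryExponent d p) (1 / 2) with hα | hα | hα
  · exact ⟨_, fun _ => E.rate_mul_meanDeviation_le_of_memoryExponent_lt hd hp0 hp1 hα⟩
  · exact ⟨_, fun _ => E.rate_mul_meanDeviation_le_of_memoryExponent_eq hd hp0 hp1 hα⟩
  · exact ⟨_, fun _ => E.rate_mul_meanDeviation_le_of_lt_memoryExponent hd hp0 hp1 hα⟩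

end Regimes

end ERW

/-- the sequence `r n * (Δ n / n - (d-2)/d)` is tight: for every
`ε > 0` there is `K > 0` such that `P(|r n (Δ n / n - (d-2)/d)| > K) < ε` for
all `n ≥ 1`. -/
theorem erw_tightness
    {G : Type*} [Group G] [DecidableEq G] {Ω : Type*} [MeasurableSpace Ω]
    {P : Measure Ω} [IsProbabilityMeasure P]
    (d : ℕ) (hd : 3 ≤ d) (p : ℝ) (hp0 : 0 ≤ p) (hp1 : p < 1)
    (E : ERW G d p Ω P) :
    ∀ ε : ℝ, 0 < ε → ∃ K : ℝ, 0 < K ∧ ∀ n : ℕ, 1 ≤ n →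
      (P {ω | K < |rate p d n * ((E.dist n ω : ℝ) / n - ((d : ℝ) - 2) / d)|}).toReal
        < ε := by
  intro ε hε
  obtain ⟨C, hC⟩ := E.exists_forall_rate_mul_meanDeviation_le hd hp0 hp1.le
  let X (n : {n : ℕ // 1 ≤ n}) (ω : Ω) : ℝ :=
    rate p d n * ((E.dist n ω : ℝ) / n - ((d : ℝ) - 2) / d)
  have hX (n : {n : ℕ // 1 ≤ n}) : Integrable (X n) P :=
    (((E.integrable_dist n).div_const _).sub (integrable_const _)).const_mul _
  have mean_abs_le (n : {n : ℕ // 1 ≤ n}) : ∫ ω, |X n ω| ∂P ≤ C := by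
    simp only [X, abs_mul, abs_of_nonneg (ERW.rate_nonneg p d n), integral_const_mul]
    exact hC n n.2
  obtain ⟨K, hK, htail⟩ := exists_forall_measure_lt_abs_lt hX mean_abs_le hε
  exact ⟨K, hK, fun n hn => htail ⟨n, hn⟩⟩

end
end

section
/- For the elephant random walk with memory parameter p on a Cayley graph that is the d-regular tree T_d (d ≥ 3), if 0 ≤ p < 1/2 and (p, d) ≠ (0, 3), then the return probability satisfies P(Δ_n = 0) ≤ exp(−n α_{p,d}² / 8) for all n ≥ 1, where α_{p,d} = 1 − 2(1 − p)/(d − 1) if 0 ≤ p ≤ 1/d and α_{p,d} = 1 − 2p if 1/d < p < 1/2. -/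
open MeasureTheory ProbabilityTheory Filter

noncomputable section

/-! Give the walk on the tree the weight `x ^ dist` with `0 < x ≤ 1`.  Every vertex has at most one
neighbour closer to the root, and the elephant moves to any given neighbour with conditional
probability at most `q = max p ((1 - p) / (d - 1))`, so in one step the expected weight grows by a
factor of at most `q x⁻¹ + (1 - q) x`.  The choice `x = √(q / (1 - q))` makes this factor
`2 √(q (1 - q)) = √(1 - α²) ≤ exp (-α² / 2)` with `α = 1 - 2 q`.  As the weight is `1` at the root,
the return probability is at most the `n`-th power of the factor. -/

section StepGenFun

/-- The expectation of `x ^ ξ` for a step `ξ = ±1` taking the value `-1` with probability `q`. -/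
def stepGenFun (q x : ℝ) : ℝ := q * x⁻¹ + (1 - q) * x

variable {q : ℝ}

lemma stepGenFun_nonneg {x : ℝ} (hq : 0 ≤ q) (hq1 : q ≤ 1) (hx : 0 ≤ x) : 0 ≤ stepGenFun q x :=
  add_nonneg (mul_nonneg hq (inv_nonneg.2 hx)) (mul_nonneg (sub_nonneg.2 hq1) hx)

lemma stepGenFun_sqrt_div (hq : 0 < q) (hq1 : q < 1) :
    stepGenFun q √(q / (1 - q)) = 2 * √(q * (1 - q)) := by
  have hq' : 0 < 1 - q := sub_pos.2 hq1
  have hsq : √q ^ 2 = q := Real.sq_sqrt hq.le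
  have hsq' : √(1 - q) ^ 2 = 1 - q := Real.sq_sqrt hq'.le
  have hne : √q ≠ 0 := (Real.sqrt_pos.2 hq).ne'
  have hne' : √(1 - q) ≠ 0 := (Real.sqrt_pos.2 hq').ne'
  calc stepGenFun q √(q / (1 - q))
      = √q ^ 2 * (√(1 - q) / √q) + √(1 - q) ^ 2 * (√q / √(1 - q)) := by
        rw [stepGenFun, Real.sqrt_div hq.le, inv_div, hsq, hsq']
    _ = 2 * (√q * √(1 - q)) := by field_simp; ring
    _ = 2 * √(q * (1 - q)) := by rw [Real.sqrt_mul hq.le]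

lemma two_mul_sqrt_mul_one_sub_le_exp (hq : 0 ≤ q) (hq1 : q ≤ 1) :
    2 * √(q * (1 - q)) ≤ Real.exp (-(1 - 2 * q) ^ 2 / 2) := by
  refine (sq_le_sq₀ (by positivity) (Real.exp_pos _).le).1 ?_
  calc (2 * √(q * (1 - q))) ^ 2
      = -(1 - 2 * q) ^ 2 + 1 := by
        rw [mul_pow, Real.sq_sqrt (mul_nonneg hq (sub_nonneg.2 hq1))]; ring
    _ ≤ Real.exp (-(1 - 2 * q) ^ 2) := Real.add_one_le_exp _
    _ = Real.exp (-(1 - 2 * q) ^ 2 / 2) ^ 2 := by rw [← Real.exp_nat_mul]; congr 1; push_cast; ring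

end StepGenFun

section TreeDistance

variable {V : Type*} {T : SimpleGraph V}

lemma exists_forall_adj_of_ne_dist_eq_add_one (hT : T.IsTree) (o v : V) :
    ∃ γ, ∀ u, T.Adj v u → u ≠ γ → T.dist o u = T.dist o v + 1 := by
  obtain ⟨path, hpath, -⟩ := hT.existsUnique_path o v
  refine ⟨path.penultimate, fun u hvu hne => ?_⟩
  refine (hT.dist_eq_dist_add_one_of_adj o hvu).resolve_left fun hcloser => hne ?_
  obtain ⟨geodesic, hgeodesic⟩ := hT.connected.exists_walk_length_eq_dist o u
  have hconcat : (geodesic.concat hvu.symm).IsPath :=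
    SimpleGraph.Walk.isPath_of_length_eq_dist _ (by simp [hgeodesic, hcloser])
  rw [(hT.existsUnique_path o v).unique hpath hconcat, SimpleGraph.Walk.penultimate_concat]

lemma exists_forall_adj_pow_dist_le (hT : T.IsTree) (o v : V) {x : ℝ} (hx : 0 < x) (hx1 : x ≤ 1) :
    ∃ γ, ∀ u, T.Adj v u →
      (u = γ → x ^ T.dist o u ≤ x⁻¹ * x ^ T.dist o v) ∧
      (u ≠ γ → x ^ T.dist o u = x * x ^ T.dist o v) := by
  obtain ⟨γ, hγ⟩ := exists_forall_adj_of_ne_dist_eq_add_one hT o v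
  refine ⟨γ, fun u hvu => ⟨fun _ => ?_, fun hne => by rw [hγ u hvu hne, pow_succ']⟩⟩
  rw [le_inv_mul_iff₀ hx, ← pow_succ']
  exact pow_le_pow_of_le_one hx.le hx1
    (by have := hT.dist_eq_dist_add_one_of_adj o hvu; omega)

lemma sum_mul_pow_dist_le (hT : T.IsTree) (o : V) {v : V} {N : Finset V}
    (hN : ∀ u ∈ N, T.Adj v u) {w : V → ℝ} (hw : ∀ u ∈ N, 0 ≤ w u) {q : ℝ} (hq : 0 ≤ q)
    (hwq : ∀ u ∈ N, w u ≤ q * ∑ u ∈ N, w u) {x : ℝ} (hx : 0 < x) (hx1 : x ≤ 1) :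
    ∑ u ∈ N, w u * x ^ T.dist o u ≤ stepGenFun q x * x ^ T.dist o v * ∑ u ∈ N, w u := by
  classical
  obtain ⟨γ, hγ⟩ := exists_forall_adj_pow_dist_le hT o v hx hx1
  set W := ∑ u ∈ N, w u
  have hgain : 0 ≤ x⁻¹ - x := sub_nonneg.2 (hx1.trans ((one_le_inv₀ hx).2 hx1))
  have hterm : ∀ u ∈ N, w u * x ^ T.dist o u ≤
      (w u * x + if u = γ then w u * (x⁻¹ - x) else 0) * x ^ T.dist o v := by
    intro u hu
    obtain ⟨hcloser, hfarther⟩ := hγ u (hN u hu)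
    split_ifs with h
    · calc w u * x ^ T.dist o u
          ≤ w u * (x⁻¹ * x ^ T.dist o v) := mul_le_mul_of_nonneg_left (hcloser h) (hw u hu)
        _ = (w u * x + w u * (x⁻¹ - x)) * x ^ T.dist o v := by ring
    · rw [hfarther h, add_zero, mul_assoc]
  have hparent : (if γ ∈ N then w γ * (x⁻¹ - x) else 0) ≤ q * W * (x⁻¹ - x) := by
    split_ifs with h
    · exact mul_le_mul_of_nonneg_right (hwq γ h) hgain
    · exact mul_nonneg (mul_nonneg hq (Finset.sum_nonneg hw)) hgain
  calc ∑ u ∈ N, w u * x ^ T.dist o u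
      ≤ ∑ u ∈ N, (w u * x + if u = γ then w u * (x⁻¹ - x) else 0) * x ^ T.dist o v :=
        Finset.sum_le_sum hterm
    _ = (W * x + if γ ∈ N then w γ * (x⁻¹ - x) else 0) * x ^ T.dist o v := by
        rw [← Finset.sum_mul, Finset.sum_add_distrib, ← Finset.sum_mul, Finset.sum_ite_eq']
    _ ≤ (W * x + q * W * (x⁻¹ - x)) * x ^ T.dist o v := by gcongr
    _ = stepGenFun q x * x ^ T.dist o v * W := by rw [stepGenFun]; ring

end TreeDistance

lemma sum_measureReal_inter_eq {V Ω : Type*} [MeasurableSpace Ω] {μ : Measure Ω}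
    [IsFiniteMeasure μ] {f : Ω → V} (hf : ∀ v, MeasurableSet {ω | f ω = v}) {A : Set Ω}
    {N : Finset V} (hA : A ⊆ f ⁻¹' N) :
    ∑ u ∈ N, μ.real (A ∩ {ω | f ω = u}) = μ.real A := by
  have hpreimage : MeasurableSet (f ⁻¹' N) := by
    rw [← Set.biUnion_preimage_singleton]
    exact N.measurableSet_biUnion fun v _ => hf v
  calc ∑ u ∈ N, μ.real (A ∩ {ω | f ω = u})
      = ∑ u ∈ N, (μ.restrict A).real (f ⁻¹' {u}) :=
        Finset.sum_congr rfl fun u _ => by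
          rw [Set.inter_comm]; exact (measureReal_restrict_apply (hf u)).symm
    _ = (μ.restrict A).real (f ⁻¹' N) := sum_measureReal_preimage_singleton N fun v _ => hf v
    _ = μ.real A := by rw [measureReal_restrict_apply hpreimage, Set.inter_eq_right.2 hA]

section PathCylinder

variable {V Ω : Type*}

/-- The event that the process `X` follows the trajectory of `ω₀` up to time `n`: the atom
containing `ω₀` of the `σ`-algebra generated by `X 0, …, X n`. -/
def pathCylinder (X : ℕ → Ω → V) (n : ℕ) (ω₀ : Ω) : Set Ω :=
  {ω | ∀ k ≤ n, X k ω = X k ω₀}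

variable {X : ℕ → Ω → V} {n : ℕ} {ω₀ ω₁ : Ω}

lemma pathCylinder_succ_of_mem (h : ω₁ ∈ pathCylinder X n ω₀) :
    pathCylinder X (n + 1) ω₁ = pathCylinder X n ω₀ ∩ {ω | X (n + 1) ω = X (n + 1) ω₁} := by
  ext ω
  simp only [pathCylinder, Set.mem_inter_iff, Set.mem_ofPred_eq, Nat.le_succ_iff,
    or_imp, forall_and, forall_eq]
  exact and_congr_left' (forall₂_congr fun k hk => by rw [h k hk])

end PathCylinder

/-- A process `X` moving along edges of `T` which, conditionally on its trajectory up to the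
present, jumps to any given vertex with probability at most `q`. -/
structure IsTransitionBoundedWalk {V Ω : Type*} [MeasurableSpace Ω] (T : SimpleGraph V)
    (μ : Measure Ω) (q : ℝ) (X : ℕ → Ω → V) : Prop where
  measurableSet_eq : ∀ n v, MeasurableSet {ω | X n ω = v}
  adj : ∀ n ω, T.Adj (X n ω) (X (n + 1) ω)
  measureReal_inter_le : ∀ n ω₀ v,
    μ.real (pathCylinder X n ω₀ ∩ {ω | X (n + 1) ω = v}) ≤ q * μ.real (pathCylinder X n ω₀)

namespace IsTransitionBoundedWalk

variable {V Ω : Type*} [MeasurableSpace Ω] {T : SimpleGraph V} [T.LocallyFinite]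
  {μ : Measure Ω} {q : ℝ} {X : ℕ → Ω → V}

lemma succ_mem_neighborFinset (hX : IsTransitionBoundedWalk T μ q X) {n : ℕ} {ω₀ ω : Ω}
    (hω : ω ∈ pathCylinder X n ω₀) : X (n + 1) ω ∈ T.neighborFinset (X n ω₀) :=
  (T.mem_neighborFinset _ _).2 (hω n le_rfl ▸ hX.adj n ω)

variable [IsFiniteMeasure μ]

lemma sum_measureReal_mul_pow_dist_le (hX : IsTransitionBoundedWalk T μ q X) (hT : T.IsTree)
    (o : V) (hq : 0 ≤ q) {x : ℝ} (hx : 0 < x) (hx1 : x ≤ 1) (n : ℕ) (ω₀ : Ω) :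
    ∑ u ∈ T.neighborFinset (X n ω₀),
        μ.real (pathCylinder X n ω₀ ∩ {ω | X (n + 1) ω = u}) * x ^ T.dist o u ≤
      stepGenFun q x * x ^ T.dist o (X n ω₀) * μ.real (pathCylinder X n ω₀) := by
  have hsum := sum_measureReal_inter_eq (μ := μ) (hX.measurableSet_eq (n + 1))
    fun _ hω => hX.succ_mem_neighborFinset (n := n) (ω₀ := ω₀) hω
  have hbound := hX.measureReal_inter_le n ω₀
  rw [← hsum] at hbound ⊢
  exact sum_mul_pow_dist_le hT o (fun u hu => (T.mem_neighborFinset _ _).1 hu)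
    (fun u _ => measureReal_nonneg) hq (fun u _ => hbound u) hx hx1

theorem measureReal_pathCylinder_inter_le (hX : IsTransitionBoundedWalk T μ q X) (hT : T.IsTree)
    (o : V) (hq : 0 ≤ q) (hq1 : q ≤ 1) {x : ℝ} (hx : 0 < x) (hx1 : x ≤ 1) (m n : ℕ) (ω₀ : Ω) :
    μ.real (pathCylinder X n ω₀ ∩ {ω | X (n + m) ω = o}) ≤
      stepGenFun q x ^ m * x ^ T.dist o (X n ω₀) * μ.real (pathCylinder X n ω₀) := by
  have hc := stepGenFun_nonneg hq hq1 hx.le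
  induction m generalizing n ω₀ with
  | zero =>
    by_cases hroot : X n ω₀ = o
    · simpa [hroot] using measureReal_mono Set.inter_subset_left
    · have hempty : pathCylinder X n ω₀ ∩ {ω | X (n + 0) ω = o} = ∅ :=
        Set.eq_empty_of_forall_notMem fun ω hω => hroot ((hω.1 n le_rfl).symm.trans hω.2)
      rw [hempty, measureReal_empty]
      positivity
  | succ m ih =>
    set H := pathCylinder X n ω₀
    have hchild (u : V) :
        μ.real (H ∩ {ω | X (n + (m + 1)) ω = o} ∩ {ω | X (n + 1) ω = u}) ≤
          stepGenFun q x ^ m * (μ.real (H ∩ {ω | X (n + 1) ω = u}) * x ^ T.dist o u) := by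
      rw [Set.inter_right_comm, ← add_assoc, Nat.add_right_comm]
      rcases (H ∩ {ω | X (n + 1) ω = u}).eq_empty_or_nonempty with hempty | ⟨ω₁, hω₁, rfl⟩
      · simp [hempty]
      · rw [← pathCylinder_succ_of_mem hω₁]
        exact (ih (n + 1) ω₁).trans_eq (by ring)
    calc μ.real (H ∩ {ω | X (n + (m + 1)) ω = o})
        = ∑ u ∈ T.neighborFinset (X n ω₀),
            μ.real (H ∩ {ω | X (n + (m + 1)) ω = o} ∩ {ω | X (n + 1) ω = u}) :=
          (sum_measureReal_inter_eq (hX.measurableSet_eq _)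
            fun _ hω => hX.succ_mem_neighborFinset hω.1).symm
      _ ≤ stepGenFun q x ^ m * ∑ u ∈ T.neighborFinset (X n ω₀),
            μ.real (H ∩ {ω | X (n + 1) ω = u}) * x ^ T.dist o u := by
          rw [Finset.mul_sum]
          exact Finset.sum_le_sum fun u _ => hchild u
      _ ≤ stepGenFun q x ^ m * (stepGenFun q x * x ^ T.dist o (X n ω₀) * μ.real H) :=
          mul_le_mul_of_nonneg_left
            (hX.sum_measureReal_mul_pow_dist_le hT o hq hx hx1 n ω₀) (pow_nonneg hc m)
      _ = stepGenFun q x ^ (m + 1) * x ^ T.dist o (X n ω₀) * μ.real H := by ring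

theorem measureReal_eq_root_le (hX : IsTransitionBoundedWalk T μ q X) (hT : T.IsTree) {o : V}
    (hX0 : ∀ ω, X 0 ω = o) (hq : 0 < q) (hq2 : q ≤ 1 / 2) (n : ℕ) :
    μ.real {ω | X n ω = o} ≤ (2 * √(q * (1 - q))) ^ n * μ.real Set.univ := by
  rcases isEmpty_or_nonempty Ω with _ | ⟨⟨ω₀⟩⟩
  · simp [Set.eq_empty_of_isEmpty]
  have hcyl : pathCylinder X 0 ω₀ = Set.univ :=
    Set.eq_univ_of_forall fun ω k hk => by rw [Nat.le_zero.1 hk, hX0, hX0]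
  have hq' : 0 < 1 - q := by linarith
  have hx : 0 < √(q / (1 - q)) := Real.sqrt_pos.2 (div_pos hq hq')
  have hx1 : √(q / (1 - q)) ≤ 1 := Real.sqrt_le_one.2 ((div_le_one hq').2 (by linarith))
  simpa [hcyl, hX0, stepGenFun_sqrt_div hq (by linarith)] using
    hX.measureReal_pathCylinder_inter_le hT o hq.le (by linarith) hx hx1 n 0 ω₀

theorem measureReal_eq_root_le_exp (hX : IsTransitionBoundedWalk T μ q X) (hT : T.IsTree) {o : V}
    (hX0 : ∀ ω, X 0 ω = o) (hq : 0 < q) (hq2 : q ≤ 1 / 2) (n : ℕ) :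
    μ.real {ω | X n ω = o} ≤ Real.exp (-(n * (1 - 2 * q) ^ 2) / 2) * μ.real Set.univ := by
  calc μ.real {ω | X n ω = o}
      ≤ (2 * √(q * (1 - q))) ^ n * μ.real Set.univ := hX.measureReal_eq_root_le hT hX0 hq hq2 n
    _ ≤ Real.exp (-(1 - 2 * q) ^ 2 / 2) ^ n * μ.real Set.univ := by
        gcongr
        exact two_mul_sqrt_mul_one_sub_le_exp hq.le (by linarith)
    _ = Real.exp (-(n * (1 - 2 * q) ^ 2) / 2) * μ.real Set.univ := by
        rw [← Real.exp_nat_mul]; congr 2; ring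

end IsTransitionBoundedWalk

section CayleyGraph

variable {G : Type*} [Group G] {S : Finset G}

lemma cayleyGraph_adj_mul_left (hS : (1 : G) ∉ S) {a : G} (ha : a ∈ S) (x : G) :
    (cayleyGraph S).Adj x (a * x) := by
  refine ⟨fun h => hS ?_, Or.inl (by simpa using ha)⟩
  rwa [← right_eq_mul.1 h]

lemma finite_neighborSet_cayleyGraph (S : Finset G) (x : G) :
    ((cayleyGraph S).neighborSet x).Finite := by
  refine ((S.finite_toSet.image (· * x)).union (S.finite_toSet.image (·⁻¹ * x))).subset ?_
  rintro y ⟨-, h | h⟩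
  · exact Or.inl ⟨_, h, by simp⟩
  · exact Or.inr ⟨_, h, by simp⟩

instance cayleyGraph.instLocallyFinite (S : Finset G) : (cayleyGraph S).LocallyFinite :=
  fun x => (finite_neighborSet_cayleyGraph S x).fintype

end CayleyGraph

section MaxStepProb

/-- The bound `max p ((1 - p) / (d - 1))` on the conditional step probabilities of the elephant
random walk: each of them averages `p` and `(1 - p) / (d - 1)`. -/
def maxStepProb (p : ℝ) (d : ℕ) : ℝ := max p ((1 - p) / ((d : ℝ) - 1))

variable {p : ℝ} {d : ℕ}

lemma le_one_sub_div_sub_one_iff (hd : 2 ≤ d) : p ≤ (1 - p) / ((d : ℝ) - 1) ↔ p ≤ 1 / d := by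
  have hd' : (2 : ℝ) ≤ d := mod_cast hd
  rw [le_div_iff₀ (by linarith), le_div_iff₀ (by linarith)]
  constructor <;> intro h <;> linarith

lemma stepProb_le_maxStepProb {N n : ℝ} (hn : 0 < n) (hN : 0 ≤ N) (hNn : N ≤ n) :
    p * (N / n) + (1 - p) / ((d : ℝ) - 1) * ((n - N) / n) ≤ maxStepProb p d := by
  calc p * (N / n) + (1 - p) / ((d : ℝ) - 1) * ((n - N) / n)
      ≤ maxStepProb p d * (N / n) + maxStepProb p d * ((n - N) / n) := by
        have := sub_nonneg.2 hNn
        gcongr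
        · exact le_max_left _ _
        · exact le_max_right _ _
    _ = maxStepProb p d := by field_simp; ring

lemma one_div_le_maxStepProb (hd : 2 ≤ d) : 1 / (d : ℝ) ≤ maxStepProb p d := by
  rcases le_total (1 / (d : ℝ)) p with h | h
  · exact h.trans (le_max_left _ _)
  · have hd' : (2 : ℝ) ≤ d := mod_cast hd
    have h' : p * d ≤ 1 := (le_div_iff₀ (by linarith)).1 h
    refine le_trans ?_ (le_max_right _ _)
    rw [div_le_div_iff₀ (by linarith) (by linarith)]
    linarith

lemma maxStepProb_pos (hd : 2 ≤ d) : 0 < maxStepProb p d :=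
  (one_div_pos.2 (Nat.cast_pos.2 (by omega))).trans_le (one_div_le_maxStepProb hd)

lemma maxStepProb_le_one_half (hd : 3 ≤ d) (hp0 : 0 ≤ p) (hp : p ≤ 1 / 2) :
    maxStepProb p d ≤ 1 / 2 := by
  have hd' : (3 : ℝ) ≤ d := mod_cast hd
  refine max_le hp ?_
  rw [div_le_iff₀ (by linarith)]
  linarith

lemma one_sub_two_mul_maxStepProb (hd : 2 ≤ d) :
    1 - 2 * maxStepProb p d =
      if p ≤ 1 / (d : ℝ) then 1 - 2 * (1 - p) / ((d : ℝ) - 1) else 1 - 2 * p := by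
  simp only [maxStepProb, max_def, le_one_sub_div_sub_one_iff hd]
  split_ifs
  · rw [mul_div_assoc]
  · rfl

end MaxStepProb

namespace ERW

variable {G : Type*} [Group G] [DecidableEq G] {d : ℕ} {p : ℝ}
  {Ω : Type*} [MeasurableSpace Ω] {P : Measure Ω} (E : ERW G d p Ω P)

lemma pos_succ (n : ℕ) (ω : Ω) : E.pos (n + 1) ω = E.g (n + 1) ω * E.pos n ω := rfl

lemma adj_pos_pos_succ (n : ℕ) (ω : Ω) : (cayleyGraph E.S).Adj (E.pos n ω) (E.pos (n + 1) ω) :=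
  cayleyGraph_adj_mul_left E.one_not_mem (E.mem_S _ n.succ_pos ω) _

lemma dist_eq_zero_iff (n : ℕ) (ω : Ω) : E.dist n ω = 0 ↔ E.pos n ω = 1 :=
  E.tree.connected.dist_eq_zero_iff.trans eq_comm

lemma measurableSet_pos_eq (n : ℕ) (v : G) : MeasurableSet {ω | E.pos n ω = v} := by
  induction n generalizing v with
  | zero => exact MeasurableSet.const (1 = v)
  | succ n ih =>
    have hunion : {ω | E.pos (n + 1) ω = v} =
        ⋃ a ∈ E.S, {ω | E.g (n + 1) ω = a} ∩ {ω | E.pos n ω = a⁻¹ * v} := by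
      ext ω
      simp [pos_succ, eq_inv_mul_iff_mul_eq, E.mem_S (n + 1) n.succ_pos ω]
    rw [hunion]
    exact Finset.measurableSet_biUnion _ fun a _ => (E.meas_g _ _).inter (ih _)

lemma pathCylinder_pos (n : ℕ) (ω₀ : Ω) :
    pathCylinder E.pos n ω₀ = {ω | ∀ k ∈ Finset.Icc 1 n, E.g k ω = E.g k ω₀} := by
  ext ω
  refine ⟨fun h k hk => ?_, fun h k => ?_⟩
  · obtain ⟨hk1, hkn⟩ := Finset.mem_Icc.1 hk
    obtain ⟨j, rfl⟩ := Nat.exists_eq_add_of_le' hk1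
    have hstep := h (j + 1) hkn
    rw [pos_succ, pos_succ, h j (by omega)] at hstep
    exact mul_right_cancel hstep
  · induction k with
    | zero => exact fun _ => rfl
    | succ k ih =>
      intro hk
      rw [pos_succ, pos_succ, ih (by omega), h (k + 1) (Finset.mem_Icc.2 ⟨by omega, hk⟩)]

lemma measureReal_pathCylinder_inter_step_le [IsProbabilityMeasure P] (hd : 2 ≤ d) (n : ℕ)
    (ω₀ : Ω) {a : G} (ha : a ∈ E.S) :
    P.real (pathCylinder E.pos n ω₀ ∩ {ω | E.g (n + 1) ω = a}) ≤
      maxStepProb p d * P.real (pathCylinder E.pos n ω₀) := by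
  rw [pathCylinder_pos]
  rcases n.eq_zero_or_pos with rfl | hn
  · simpa [measureReal_def, E.init a ha] using one_div_le_maxStepProb hd
  · have hcard : ((Finset.Icc 1 n).filter fun k => E.g k ω₀ = a).card ≤ n :=
      (Finset.card_filter_le _ _).trans_eq (by simp)
    refine (E.update n hn (E.g · ω₀) a ha).trans_le ?_
    refine mul_le_mul_of_nonneg_right ?_ measureReal_nonneg
    exact stepProb_le_maxStepProb (Nat.cast_pos.2 hn) (Nat.cast_nonneg _) (Nat.cast_le.2 hcard)

theorem isTransitionBoundedWalk_pos [IsProbabilityMeasure P] (hd : 2 ≤ d) :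
    IsTransitionBoundedWalk (cayleyGraph E.S) P (maxStepProb p d) E.pos where
  measurableSet_eq := E.measurableSet_pos_eq
  adj := E.adj_pos_pos_succ
  measureReal_inter_le n ω₀ v := by
    have hstep : pathCylinder E.pos n ω₀ ∩ {ω | E.pos (n + 1) ω = v} ⊆
        pathCylinder E.pos n ω₀ ∩ {ω | E.g (n + 1) ω = v * (E.pos n ω₀)⁻¹} := by
      rintro ω ⟨hω, rfl⟩
      exact ⟨hω, by simp [pos_succ, hω n le_rfl]⟩
    by_cases hv : v * (E.pos n ω₀)⁻¹ ∈ E.S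
    · exact (measureReal_mono hstep).trans (E.measureReal_pathCylinder_inter_step_le hd n ω₀ hv)
    · have hempty : pathCylinder E.pos n ω₀ ∩ {ω | E.pos (n + 1) ω = v} = ∅ :=
        Set.eq_empty_of_forall_notMem fun ω hω =>
          hv ((hstep hω).2 ▸ E.mem_S (n + 1) n.succ_pos ω)
      rw [hempty, measureReal_empty]
      exact mul_nonneg (maxStepProb_pos hd).le measureReal_nonneg

theorem measureReal_dist_eq_zero_le_exp [IsProbabilityMeasure P] (hd : 3 ≤ d) (hp0 : 0 ≤ p)
    (hp : p ≤ 1 / 2) (n : ℕ) :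
    P.real {ω | E.dist n ω = 0} ≤ Real.exp (-(n * (1 - 2 * maxStepProb p d) ^ 2) / 2) := by
  simpa [dist_eq_zero_iff] using
    (E.isTransitionBoundedWalk_pos (by omega)).measureReal_eq_root_le_exp E.tree (o := 1)
      (fun _ => rfl) (maxStepProb_pos (by omega)) (maxStepProb_le_one_half hd hp0 hp) n

end ERW

/-- return probability, subcritical memory: if `0 ≤ p < 1/2` and
`(p, d) ≠ (0, 3)`, then `P(Δ n = 0) ≤ exp(- n α² / 8)` for all `n ≥ 1`, where
`α = 1 - 2(1-p)/(d-1)` if `p ≤ 1/d` and `α = 1 - 2p` if `1/d < p < 1/2`. -/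
theorem erw_return_prob_exponential
    {G : Type*} [Group G] [DecidableEq G] {Ω : Type*} [MeasurableSpace Ω]
    {P : Measure Ω} [IsProbabilityMeasure P]
    (d : ℕ) (hd : 3 ≤ d) (p : ℝ) (hp0 : 0 ≤ p) (hp : p < 1 / 2)
    (hpd : ¬(p = 0 ∧ d = 3))
    (E : ERW G d p Ω P) :
    ∀ n : ℕ, 1 ≤ n →
      (P {ω | E.dist n ω = 0}).toReal ≤
        Real.exp (-((n : ℝ) *
          (if p ≤ 1 / (d : ℝ) then 1 - 2 * (1 - p) / ((d : ℝ) - 1)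
            else 1 - 2 * p) ^ 2) / 8) := by
  intro n _
  rw [← one_sub_two_mul_maxStepProb (by omega : 2 ≤ d)]
  refine (E.measureReal_dist_eq_zero_le_exp hd hp0 hp.le n).trans (Real.exp_le_exp.2 ?_)
  have hnonneg : 0 ≤ (n : ℝ) * (1 - 2 * maxStepProb p d) ^ 2 := by positivity
  linarith

end
end
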